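/- Let 1<q<∞ with conjugate exponent q' (1/q+1/q'=1), let ω be a radial weight on [0,1) with ω∈𝒟 and ω̂(r)>0 for all r∈[0,1), extended to 𝔹 by ω(z)=ω(|z|), and let B^ω be the reproducing kernel of A²_ω. Define h(z)=ω̂(|z|)^{−1/(qq')} for z∈𝔹. Then there exists a constant C>0 such that ∫_𝔹 |B^ω_z(ξ)| h(z)^q ω(z) dV(z) ≤ C·h(ξ)^q for every ξ∈𝔹. -/

import Mathlib

/-!
By the rotation invariance of the measure `ω dV`, the reproducing kernel of `A²_ω` depends on `⟨ξ, z⟩`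
only: `B_z(ξ) = ∑_k ⟨ξ, z⟩^k / d_k`, where `d_k = ∫_𝔹 |w_i|^{2k} ω dV` is the squared norm of the
`k`-th power of a coordinate (`kernel_formula`). The Taylor coefficients come from testing the
reproducing property on powers of linear forms and averaging over rotations (`coeff_integral`).

In polar coordinates `d_k` is a spherical moment, known explicitly up to a constant from a Gaussian
integral (`sm_formula`), times a radial moment of `ω`. The two conditions defining `𝒟` say that
`W_N = ω̂(1 - 2⁻ᴺ)` neither drops too fast nor too slowly in `N`; hence the `2^N`-th radial moment of
`ω̂^(-a) ω`, for `0 ≤ a < 1`, is at most a constant times `W_N^(1-a)` (`moment_upper`), and `d_k` is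
decreasing, doubling, and has differences `d_{k+1} - d_k` of order `d_k / k` (`dd_doubling`, `dd_diff`).

The kernel series is cut into dyadic blocks by trapezoidal cutoffs in `k`. The coefficients of the
`N`-th block vary slowly, so its `L¹` norm over the circle of radius `t` is at most a constant times
`t^(2^N) / d_{2^(N+3)}` (`trig_L1`, `block_L1`); sharp truncations would lose a logarithm here.
Integrating over `z` against `h^q ω = ω̂^(-a) ω` with `a = 1/q'`, and using `block_const`, the
`N`-th block contributes at most a constant times `|ξ|^(2^N) W_N^(-a)`. These contributions sum to
at most a constant times `ω̂(|ξ|)^(-a) = h(ξ)^q` (`sum_blocks`), again by the two conditions of `𝒟`.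
-/

open MeasureTheory Metric Filter

noncomputable section

/-- A weight on `[0,1)`: a non-negative, measurable, integrable function. -/
def IsWeight (ω : ℝ → ℝ) : Prop :=
  (∀ r ∈ Set.Ico (0:ℝ) 1, 0 ≤ ω r) ∧ Measurable ω ∧ IntegrableOn ω (Set.Ico 0 1)

/-- `ω̂(r) = ∫_r^1 ω(t) dt`. -/
def wh (ω : ℝ → ℝ) (r : ℝ) : ℝ := ∫ t in Set.Ioo r 1, ω t

/-- The class `Dhat` of upper doubling weights. -/
def DHat (ω : ℝ → ℝ) : Prop :=
  ∃ C : ℝ, 1 ≤ C ∧ ∀ r ∈ Set.Ico (0:ℝ) 1, wh ω r ≤ C * wh ω ((1 + r) / 2)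

/-- The class `Dcheck`: there exist `C, K > 1` with `ω̂(r) ≥ C·ω̂(1-(1-r)/K)`. -/
def DCheck (ω : ℝ → ℝ) : Prop :=
  ∃ C K : ℝ, 1 < C ∧ 1 < K ∧ ∀ r ∈ Set.Ico (0:ℝ) 1,
    C * wh ω (1 - (1 - r) / K) ≤ wh ω r

/-- `D = Dhat ∩ Dcheck`. -/
def DD (ω : ℝ → ℝ) : Prop := DHat ω ∧ DCheck ω

/-- `ℂⁿ`. -/
abbrev En (n : ℕ) := EuclideanSpace ℂ (Fin n)

instance (n : ℕ) : MeasurableSpace (En n) := borel _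
instance (n : ℕ) : BorelSpace (En n) := ⟨rfl⟩

/-- The normalized volume measure on `ℂⁿ`, giving the unit ball measure `1`. -/
def nV (n : ℕ) : Measure (En n) := (volume (ball (0 : En n) 1))⁻¹ • volume

/-- The open unit ball `the unit ball` of `ℂⁿ`. -/
def Bl (n : ℕ) : Set (En n) := ball 0 1

/-- Membership in the Bergman space `A^p_ω`: holomorphic on `the unit ball` with finite norm. -/
def InAp (n : ℕ) (p : ℝ) (ω : ℝ → ℝ) (f : En n → ℂ) : Prop :=
  DifferentiableOn ℂ f (Bl n) ∧
    IntegrableOn (fun z => ‖f z‖ ^ p * ω ‖z‖) (Bl n) (nV n)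

/-- The norm of `A^p_ω`. -/
def ApNorm (n : ℕ) (p : ℝ) (ω : ℝ → ℝ) (f : En n → ℂ) : ℝ :=
  (∫ z in Bl n, ‖f z‖ ^ p * ω ‖z‖ ∂(nV n)) ^ (1 / p)

/-- `B` is the reproducing kernel of `A²_ω`: each `B z` lies in `A²_ω` and
`f(z) = ⟨f, B z⟩_{A²_ω}` for all `f ∈ A²_ω` and `z ∈ the unit ball`. -/
def IsRepKernel (n : ℕ) (ω : ℝ → ℝ) (B : En n → En n → ℂ) : Prop :=
  (∀ z ∈ Bl n, InAp n 2 ω (B z)) ∧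
    ∀ f : En n → ℂ, InAp n 2 ω f → ∀ z ∈ Bl n,
      f z = ∫ ξ in Bl n, f ξ * (starRingEnd ℂ) (B z ξ) * (ω ‖ξ‖ : ℂ) ∂(nV n)

/-! ### Dyadic sums of weights -/

/-- A series whose terms decay geometrically away from the index `N`, in both directions, is
controlled by its `N`-th scale. -/
lemma tsum_ofReal_le_of_geometric {ρ : ℝ} (h0 : 0 < ρ) (h1 : ρ < 1) (y : ℕ → ℝ) (N : ℕ) (X : ℝ)
    (hX : 0 ≤ X) (hle : ∀ j, y (N + j) ≤ ρ ^ j * X) (hge : ∀ j ≤ N, y (N - j) ≤ ρ ^ j * X) :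
    ∑' i, ENNReal.ofReal (y i) ≤ ENNReal.ofReal (2 * (1 - ρ)⁻¹ * X) := by
  have hs : Summable fun j : ℕ => ρ ^ j * X := (summable_geometric_of_lt_one h0.le h1).mul_right X
  have hv : ∑' j : ℕ, ρ ^ j * X = (1 - ρ)⁻¹ * X := by
    rw [tsum_mul_right, tsum_geometric_of_lt_one h0.le h1]
  have hp : ∀ j : ℕ, 0 ≤ ρ ^ j * X := fun j => by positivity
  have hpos : 0 ≤ (1 - ρ)⁻¹ * X := mul_nonneg (inv_nonneg.2 (by linarith)) hX
  rw [← ENNReal.summable.sum_add_tsum_nat_add' (k := N)]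
  have hA : ∑ i ∈ Finset.range N, ENNReal.ofReal (y i) ≤ ENNReal.ofReal ((1 - ρ)⁻¹ * X) := by
    rw [← Finset.sum_range_reflect]
    calc _ ≤ ∑ j ∈ Finset.range N, ENNReal.ofReal (ρ ^ j * X) := by
          refine Finset.sum_le_sum fun j hj => ENNReal.ofReal_le_ofReal ?_
          have hj' := Finset.mem_range.1 hj
          have := hge (j + 1) hj'
          rw [show N - 1 - j = N - (j + 1) by omega]
          refine this.trans ?_
          gcongr ?_ * X
          exact pow_le_pow_of_le_one h0.le h1.le (Nat.le_succ j)
      _ ≤ _ := by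
          rw [← ENNReal.ofReal_sum_of_nonneg (fun j _ => hp j), ← hv]
          exact ENNReal.ofReal_le_ofReal (hs.sum_le_tsum _ (fun j _ => hp j))
  have hB : ∑' i, ENNReal.ofReal (y (i + N)) ≤ ENNReal.ofReal ((1 - ρ)⁻¹ * X) := by
    rw [← hv, ENNReal.ofReal_tsum_of_nonneg hp hs]
    refine ENNReal.tsum_le_tsum fun j => ENNReal.ofReal_le_ofReal ?_
    rw [add_comm]; exact hle j
  calc _ ≤ _ := add_le_add hA hB
    _ = _ := by rw [← ENNReal.ofReal_add hpos hpos]; congr 1; ring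

/-- Double exponential decay beats any geometric growth. -/
lemma exists_exp_bound (A ρ : ℝ) (hA : 0 < A) (hρ : 0 < ρ) :
    ∃ C : ℝ, 0 < C ∧ ∀ j : ℕ, Real.exp (-(2:ℝ) ^ j / 2) * A ^ j ≤ C * ρ ^ j := by
  have ht : Tendsto (fun j : ℕ => Real.exp (-(2:ℝ) ^ j / 2) * (A / ρ) ^ j) atTop (nhds 0) := by
    -- a power of `2 ^ j` dominates `(A / ρ) ^ j`
    obtain ⟨k, hk⟩ := pow_unbounded_of_one_lt (A / ρ) (one_lt_two (α := ℝ))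
    have h1 : Tendsto (fun x : ℝ => x ^ k * Real.exp (-x)) atTop (nhds 0) :=
      Real.tendsto_pow_mul_exp_neg_atTop_nhds_zero k
    have h2 : Tendsto (fun j : ℕ => (2:ℝ) ^ j / 2) atTop atTop :=
      (tendsto_pow_atTop_atTop_of_one_lt one_lt_two).atTop_div_const (by norm_num)
    have h3 := (h1.comp h2).const_mul ((2:ℝ) ^ k)
    rw [mul_zero] at h3
    refine squeeze_zero (fun j => by positivity) (fun j => ?_) h3
    simp only [Function.comp]
    have : (A / ρ) ^ j ≤ ((2:ℝ) ^ k) ^ j := pow_le_pow_left₀ (by positivity) hk.le j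
    calc _ ≤ Real.exp (-(2:ℝ) ^ j / 2) * ((2:ℝ) ^ k) ^ j := by gcongr
      _ = _ := by
        rw [div_pow, ← pow_mul, ← pow_mul, mul_comm k j, neg_div]; field_simp
  obtain ⟨C, hC⟩ := ht.bddAbove_range
  refine ⟨max C 1, by positivity, fun j => ?_⟩
  have := (hC ⟨j, rfl⟩ : Real.exp (-(2:ℝ) ^ j / 2) * (A / ρ) ^ j ≤ C)
  rw [div_pow, ← mul_div_assoc, div_le_iff₀ (by positivity)] at this
  exact this.trans (by gcongr; exact le_max_left _ _)

lemma one_sub_pow_le_exp (i N j : ℕ) (h : N = i + j) :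
    (1 - (2:ℝ)⁻¹ ^ (i + 1)) ^ (2 ^ N) ≤ Real.exp (-(2:ℝ) ^ j / 2) := by
  have h1 : (1 - (2:ℝ)⁻¹ ^ (i + 1)) ≤ Real.exp (-(2:ℝ)⁻¹ ^ (i + 1)) := by
    have := Real.add_one_le_exp (-(2:ℝ)⁻¹ ^ (i + 1)); linarith
  have h0 : 0 ≤ 1 - (2:ℝ)⁻¹ ^ (i + 1) := sub_nonneg.2 (pow_le_one₀ (by norm_num) (by norm_num))
  refine (pow_le_pow_left₀ h0 h1 _).trans (le_of_eq ?_)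
  rw [← Real.exp_nat_mul]
  congr 1
  subst h
  push_cast
  rw [pow_add, pow_add, inv_pow]
  field_simp

/-- The value of `ω̂` at the dyadic point `1 - 2⁻ⁱ`. -/
def Wd (ω : ℝ → ℝ) (i : ℕ) : ℝ := wh ω (1 - (2:ℝ)⁻¹ ^ i)

lemma dyadic_mem (i : ℕ) : (1 - (2:ℝ)⁻¹ ^ i) ∈ Set.Ico (0:ℝ) 1 := by
  have : (2:ℝ)⁻¹ ^ i ≤ 1 := pow_le_one₀ (by norm_num) (by norm_num)
  have : 0 < (2:ℝ)⁻¹ ^ i := by positivity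
  constructor <;> linarith

lemma wh_anti {ω : ℝ → ℝ} (hω : IsWeight ω) {r s : ℝ} (h0 : 0 ≤ r) (hrs : r ≤ s) :
    wh ω s ≤ wh ω r := by
  unfold wh
  have hsub : Set.Ioo r 1 ⊆ Set.Ico 0 1 := fun x hx => ⟨h0.trans hx.1.le, hx.2⟩
  refine setIntegral_mono_set (hω.2.2.mono_set hsub) ?_ ?_
  · exact (ae_restrict_iff' measurableSet_Ioo).2 (ae_of_all _ fun x hx => hω.1 x (hsub hx))
  · exact (Set.Ioo_subset_Ioo_left hrs).eventuallyLE

lemma Wd_pos {ω : ℝ → ℝ} (hpos : ∀ r ∈ Set.Ico (0:ℝ) 1, 0 < wh ω r) (i : ℕ) : 0 < Wd ω i :=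
  hpos _ (dyadic_mem i)

/-- The upper doubling condition on dyadic points: `W_i` grows at most geometrically backwards. -/
lemma Wd_doubling {ω : ℝ → ℝ} (hD : DHat ω) :
    ∃ A : ℝ, 1 ≤ A ∧ ∀ i j, Wd ω i ≤ A ^ j * Wd ω (i + j) := by
  obtain ⟨A, hA, h⟩ := hD
  refine ⟨A, hA, fun i j => ?_⟩
  induction j with
  | zero => simp
  | succ j ih =>
    refine ih.trans ?_
    have := h _ (dyadic_mem (i + j))
    rw [pow_succ, mul_assoc]
    gcongr
    have he : Wd ω (i + (j + 1)) = wh ω ((1 + (1 - (2:ℝ)⁻¹ ^ (i + j))) / 2) := by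
      unfold Wd
      congr 1
      rw [← add_assoc, pow_succ]; ring
    rw [he]
    exact this

/-- The class `𝒟̌` gives geometric decay of the dyadic values: the condition is iterated
`⌊j log 2 / log K⌋` times to pass from scale `i` to scale `i + j`. -/
lemma Wd_decay {ω : ℝ → ℝ} (hω : IsWeight ω) (hD : DCheck ω)
    (hpos : ∀ r ∈ Set.Ico (0:ℝ) 1, 0 < wh ω r) :
    ∃ C ρ : ℝ, 0 < C ∧ 0 < ρ ∧ ρ < 1 ∧ ∀ i j, Wd ω (i + j) ≤ C * ρ ^ j * Wd ω i := by
  obtain ⟨C, K, hC, hK, h⟩ := hD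
  have hlog : 0 < Real.log K := Real.log_pos hK
  have hit : ∀ r ∈ Set.Ico (0:ℝ) 1, ∀ l : ℕ, C ^ l * wh ω (1 - (1 - r) / K ^ l) ≤ wh ω r := by
    intro r hr l
    induction l with
    | zero => simp
    | succ l ih =>
      have hKl : 1 ≤ K ^ l := one_le_pow₀ hK.le
      have hmem : (1 - (1 - r) / K ^ l) ∈ Set.Ico (0:ℝ) 1 := by
        have h1 : (1 - r) / K ^ l ≤ 1 := by
          rw [div_le_one (by positivity)]; linarith [hr.1]
        have h2 : 0 < (1 - r) / K ^ l := div_pos (by linarith [hr.2]) (by positivity)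
        constructor <;> linarith
      have := h _ hmem
      refine le_trans ?_ ih
      rw [pow_succ, mul_assoc]
      gcongr
      have he : 1 - (1 - r) / K ^ (l + 1) = 1 - (1 - (1 - (1 - r) / K ^ l)) / K := by
        rw [pow_succ]; field_simp; ring
      rw [he]
      exact this
  set θ := Real.log 2 / Real.log K with hθ
  have hθ0 : 0 < θ := div_pos (Real.log_pos one_lt_two) hlog
  have hC0 : 0 < C := by linarith
  refine ⟨C, C ^ (-θ), hC0, by positivity, Real.rpow_lt_one_of_one_lt_of_neg hC (by linarith),
    fun i j => ?_⟩
  set l := ⌊(j:ℝ) * θ⌋₊ with hl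
  have hl1 : (l:ℝ) ≤ j * θ := Nat.floor_le (by positivity)
  have hl2 : (j:ℝ) * θ < l + 1 := Nat.lt_floor_add_one _
  have hKl : K ^ l ≤ 2 ^ j := by
    rw [← Real.log_le_log_iff (by positivity) (by positivity), Real.log_pow, Real.log_pow]
    rw [hθ, ← mul_div_assoc, le_div_iff₀ hlog] at hl1
    exact hl1
  have h1 : Wd ω (i + j) ≤ wh ω (1 - (1 - (1 - (2:ℝ)⁻¹ ^ i)) / K ^ l) := by
    unfold Wd
    refine wh_anti hω ?_ ?_
    · have : (2:ℝ)⁻¹ ^ i / K ^ l ≤ 1 := by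
        rw [div_le_one (by positivity)]
        exact (pow_le_one₀ (by norm_num) (by norm_num)).trans (one_le_pow₀ hK.le)
      rw [sub_sub_cancel]; linarith
    · rw [sub_sub_cancel, pow_add, div_eq_mul_inv]
      gcongr
      rw [inv_pow]
      gcongr
  have h2 := hit _ (dyadic_mem i) l
  have h3 : 1 ≤ C * (C ^ (-θ)) ^ j * C ^ l := by
    rw [← Real.rpow_natCast, ← Real.rpow_mul hC0.le, ← Real.rpow_natCast C l]
    nth_rewrite 1 [← Real.rpow_one C]
    rw [← Real.rpow_add hC0, ← Real.rpow_add hC0]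
    refine Real.one_le_rpow hC.le ?_
    nlinarith
  have hw := Wd_pos hpos (i + j)
  calc Wd ω (i + j) ≤ (C * (C ^ (-θ)) ^ j * C ^ l) * Wd ω (i + j) := le_mul_of_one_le_left hw.le h3
    _ = C * (C ^ (-θ)) ^ j * (C ^ l * Wd ω (i + j)) := by ring
    _ ≤ C * (C ^ (-θ)) ^ j * Wd ω i := by
      gcongr
      refine le_trans ?_ h2
      gcongr

/-- A number `x ∈ [0,1)` lies in a dyadic interval `[1 - 2⁻ᴹ, 1 - 2⁻⁽ᴹ⁺¹⁾)`. -/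
lemma exists_dyadic {x : ℝ} (h0 : 0 ≤ x) (h1 : x < 1) :
    ∃ M : ℕ, 1 - (2:ℝ)⁻¹ ^ M ≤ x ∧ x < 1 - (2:ℝ)⁻¹ ^ (M + 1) := by
  have := exists_nat_pow_near_of_lt_one (x := 1 - x) (y := (2:ℝ)⁻¹) (by linarith) (by linarith)
    (by norm_num) (by norm_num)
  obtain ⟨M, h2, h3⟩ := this
  exact ⟨M, by linarith, by linarith⟩

/-- `∑_i (1 - 2⁻⁽ⁱ⁺¹⁾)^(2^N) W_i^s ≲ W_N^s` for `s > 0`. -/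
lemma sum_radial {ω : ℝ → ℝ} (hω : IsWeight ω) (hD : DD ω)
    (hpos : ∀ r ∈ Set.Ico (0:ℝ) 1, 0 < wh ω r) {s : ℝ} (hs : 0 < s) :
    ∃ C : ℝ, 0 < C ∧ ∀ N, ∑' i, ENNReal.ofReal ((1 - (2:ℝ)⁻¹ ^ (i + 1)) ^ (2 ^ N) * Wd ω i ^ s)
      ≤ ENNReal.ofReal (C * Wd ω N ^ s) := by
  obtain ⟨A, hA, hdbl⟩ := Wd_doubling hD.1
  obtain ⟨D, ρ, hD0, hρ0, hρ1, hdec⟩ := Wd_decay hω hD.2 hpos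
  have hA0 : 0 < A := by linarith
  have hr1 : ρ ^ s < 1 := Real.rpow_lt_one hρ0.le hρ1 hs
  have hr0 : 0 < ρ ^ s := by positivity
  obtain ⟨E, hE, hexp⟩ := exists_exp_bound (A ^ s) (ρ ^ s) (by positivity) hr0
  refine ⟨2 * (1 - ρ ^ s)⁻¹ * (D ^ s + E), ?_, fun N => ?_⟩
  · have : 0 < 1 - ρ ^ s := by linarith
    positivity
  have hW := fun i => Wd_pos hpos (ω := ω) i
  rw [mul_assoc]
  have hX : 0 ≤ (D ^ s + E) * Wd ω N ^ s := by have := hW N; positivity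
  have hlo : ∀ i : ℕ, 0 ≤ 1 - (2:ℝ)⁻¹ ^ (i + 1) := fun i => (dyadic_mem (i + 1)).1
  have hhi : ∀ i : ℕ, 1 - (2:ℝ)⁻¹ ^ (i + 1) ≤ 1 := fun i => (dyadic_mem (i + 1)).2.le
  refine tsum_ofReal_le_of_geometric hr0 hr1 _ N _ hX (fun j => ?_) (fun j hj => ?_)
  · have h1 : Wd ω (N + j) ^ s ≤ D ^ s * (ρ ^ s) ^ j * Wd ω N ^ s := by
      have := Real.rpow_le_rpow (hW (N + j)).le (hdec N j) hs.le
      rwa [Real.mul_rpow (by positivity) (hW N).le, Real.mul_rpow hD0.le (by positivity),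
        ← Real.rpow_pow_comm hρ0.le] at this
    calc _ ≤ 1 * (D ^ s * (ρ ^ s) ^ j * Wd ω N ^ s) := by
          gcongr
          · have := hW (N + j); positivity
          · exact pow_le_one₀ (hlo _) (hhi _)
      _ ≤ _ := by
          have := hW N
          rw [one_mul, mul_comm (D ^ s), mul_assoc]
          gcongr
          linarith
  · obtain ⟨i, rfl⟩ := Nat.exists_eq_add_of_le hj
    have h1 : Wd ω i ^ s ≤ (A ^ s) ^ j * Wd ω (j + i) ^ s := by
      have := Real.rpow_le_rpow (hW i).le (hdbl i j) hs.le
      rwa [Real.mul_rpow (by positivity) (hW _).le, ← Real.rpow_pow_comm hA0.le,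
        add_comm i j] at this
    rw [Nat.add_sub_cancel_left]
    calc _ ≤ Real.exp (-(2:ℝ) ^ j / 2) * ((A ^ s) ^ j * Wd ω (j + i) ^ s) := by
          gcongr
          · have := hW i; positivity
          · exact one_sub_pow_le_exp i (j + i) j (by omega)
      _ ≤ (E * (ρ ^ s) ^ j) * Wd ω (j + i) ^ s := by
          have := hW (j + i)
          rw [← mul_assoc]; exact mul_le_mul_of_nonneg_right (hexp j) (by positivity)
      _ ≤ _ := by
          have := hW (j + i)
          rw [mul_comm E, mul_assoc]
          gcongr
          have : 0 < D ^ s := by positivity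
          linarith

/-- `∑_N x^(2^N) W_N^(-a) ≲ ω̂(x)^(-a)` for `a > 0`. -/
lemma sum_blocks {ω : ℝ → ℝ} (hω : IsWeight ω) (hD : DD ω)
    (hpos : ∀ r ∈ Set.Ico (0:ℝ) 1, 0 < wh ω r) {a : ℝ} (ha : 0 < a) :
    ∃ C : ℝ, 0 < C ∧ ∀ x ∈ Set.Ico (0:ℝ) 1, ∑' N, ENNReal.ofReal (x ^ (2 ^ N) * Wd ω N ^ (-a))
      ≤ ENNReal.ofReal (C * wh ω x ^ (-a)) := by
  obtain ⟨A, hA, hdbl⟩ := Wd_doubling hD.1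
  obtain ⟨D, ρ, hD0, hρ0, hρ1, hdec⟩ := Wd_decay hω hD.2 hpos
  have hA0 : 0 < A := by linarith
  have hr1 : ρ ^ a < 1 := Real.rpow_lt_one hρ0.le hρ1 ha
  have hr0 : 0 < ρ ^ a := by positivity
  obtain ⟨E, hE, hexp⟩ := exists_exp_bound (A ^ a) (ρ ^ a) (by positivity) hr0
  have hW := fun i => Wd_pos hpos (ω := ω) i
  have key : ∀ {X Y c : ℝ}, 0 < X → 0 < Y → 0 < c → Y ≤ c * X → X ^ (-a) ≤ c ^ a * Y ^ (-a) := by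
    intro X Y c hX hY hc h
    have := Real.rpow_le_rpow hY.le h ha.le
    rw [Real.mul_rpow hc.le hX.le] at this
    rw [Real.rpow_neg hX.le, Real.rpow_neg hY.le, ← div_eq_mul_inv, ← one_div,
      div_le_div_iff₀ (by positivity) (by positivity)]
    linarith
  refine ⟨2 * (1 - ρ ^ a)⁻¹ * (D ^ a + E), ?_, fun x hx => ?_⟩
  · have : 0 < 1 - ρ ^ a := by linarith
    positivity
  obtain ⟨M, hM1, hM2⟩ := exists_dyadic hx.1 hx.2
  have hwx := hpos x hx
  have hlast : Wd ω M ^ (-a) ≤ wh ω x ^ (-a) :=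
    Real.rpow_le_rpow_of_nonpos hwx (wh_anti hω (dyadic_mem M).1 hM1) (by linarith)
  have hX : 0 ≤ (D ^ a + E) * Wd ω M ^ (-a) := by have := hW M; positivity
  refine le_trans (b := ENNReal.ofReal (2 * (1 - ρ ^ a)⁻¹ * ((D ^ a + E) * Wd ω M ^ (-a)))) ?_ ?_
  swap
  · have : 0 < 1 - ρ ^ a := by linarith
    rw [← mul_assoc]
    gcongr
  refine tsum_ofReal_le_of_geometric hr0 hr1 _ M _ hX (fun j => ?_) (fun j hj => ?_)
  · have h1 : Wd ω (M + j) ^ (-a) ≤ (A ^ a) ^ j * Wd ω M ^ (-a) := by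
      have := key (hW (M + j)) (hW M) (pow_pos hA0 j) (hdbl M j)
      rwa [← Real.rpow_pow_comm hA0.le] at this
    have h2 : x ^ (2 ^ (M + j)) ≤ Real.exp (-(2:ℝ) ^ j / 2) :=
      (pow_le_pow_left₀ hx.1 hM2.le _).trans (one_sub_pow_le_exp M (M + j) j rfl)
    calc _ ≤ Real.exp (-(2:ℝ) ^ j / 2) * ((A ^ a) ^ j * Wd ω M ^ (-a)) := by
          have := hW (M + j)
          gcongr
      _ ≤ (E * (ρ ^ a) ^ j) * Wd ω M ^ (-a) := by
          have := hW M
          rw [← mul_assoc]; exact mul_le_mul_of_nonneg_right (hexp j) (by positivity)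
      _ ≤ _ := by
          have := hW M
          rw [mul_comm E, mul_assoc]
          gcongr
          have : 0 < D ^ a := by positivity
          linarith
  · obtain ⟨i, rfl⟩ := Nat.exists_eq_add_of_le hj
    rw [Nat.add_sub_cancel_left]
    have h1 : Wd ω i ^ (-a) ≤ D ^ a * (ρ ^ a) ^ j * Wd ω (j + i) ^ (-a) := by
      have hd := hdec i j
      rw [add_comm i j] at hd
      have := key (hW i) (hW (j + i)) (by positivity) hd
      rwa [Real.mul_rpow hD0.le (by positivity), ← Real.rpow_pow_comm hρ0.le] at this
    calc _ ≤ 1 * (D ^ a * (ρ ^ a) ^ j * Wd ω (j + i) ^ (-a)) := by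
          have := hW i
          gcongr
          exact pow_le_one₀ hx.1 hx.2.le
      _ ≤ _ := by
          have := hW (j + i)
          rw [one_mul, mul_comm (D ^ a), mul_assoc]
          gcongr
          linarith

/-! ### Radial moments -/

/-- The weight `ω̂^(-a) ω`. The argument of `ω̂` is truncated at `0` so that the function is
measurable on all of `ℝ`; the truncation is invisible on `[0,1)`. -/
def vw (ω : ℝ → ℝ) (a r : ℝ) : ℝ := wh ω (max r 0) ^ (-a) * ω r

lemma vw_eq {ω : ℝ → ℝ} {a r : ℝ} (hr : 0 ≤ r) : vw ω a r = wh ω r ^ (-a) * ω r := by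
  rw [vw, max_eq_left hr]

lemma vw_zero (ω : ℝ → ℝ) (r : ℝ) : vw ω 0 r = ω r := by simp [vw]

lemma vw_measurable {ω : ℝ → ℝ} (hω : IsWeight ω) (a : ℝ) : Measurable (vw ω a) := by
  have h : Antitone fun r => wh ω (max r 0) := fun r s hrs =>
    wh_anti hω (le_max_right _ _) (max_le_max_right 0 hrs)
  exact (h.measurable.pow_const (-a)).mul hω.2.1

lemma vw_nonneg {ω : ℝ → ℝ} (hω : IsWeight ω) (hpos : ∀ r ∈ Set.Ico (0:ℝ) 1, 0 < wh ω r) {a r : ℝ}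
    (hr : r ∈ Set.Ico (0:ℝ) 1) : 0 ≤ vw ω a r := by
  rw [vw_eq hr.1]
  exact mul_nonneg (Real.rpow_nonneg (hpos r hr).le _) (hω.1 r hr)

lemma lintegral_eq_wh {ω : ℝ → ℝ} (hω : IsWeight ω) {r : ℝ} (hr : 0 ≤ r) :
    ∫⁻ t in Set.Ioo r 1, ENNReal.ofReal (ω t) = ENNReal.ofReal (wh ω r) := by
  have hsub : Set.Ioo r 1 ⊆ Set.Ico 0 1 := fun x hx => ⟨hr.trans hx.1.le, hx.2⟩
  rw [wh, ofReal_integral_eq_lintegral_ofReal (hω.2.2.mono_set hsub)]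
  exact (ae_restrict_iff' measurableSet_Ioo).2 (ae_of_all _ fun x hx => hω.1 x (hsub hx))

/-- Upper bound for the moments of `ω̂^(-a) ω`: the `2^N`-th moment is `≲ ω̂(1 - 2⁻ᴺ)^(1-a)`. -/
lemma moment_upper {ω : ℝ → ℝ} (hω : IsWeight ω) (hD : DD ω)
    (hpos : ∀ r ∈ Set.Ico (0:ℝ) 1, 0 < wh ω r) {a : ℝ} (ha0 : 0 ≤ a) (ha : a < 1) :
    ∃ C : ℝ, 0 < C ∧ ∀ N, ∫⁻ r in Set.Ioo (0:ℝ) 1, ENNReal.ofReal (r ^ (2 ^ N) * vw ω a r)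
      ≤ ENNReal.ofReal (C * Wd ω N ^ (1 - a)) := by
  obtain ⟨A, hA, hdbl⟩ := Wd_doubling hD.1
  have hA0 : 0 < A := by linarith
  obtain ⟨C, hC, hsum⟩ := sum_radial hω hD hpos (s := 1 - a) (by linarith)
  have hW := fun i => Wd_pos hpos (ω := ω) i
  refine ⟨A ^ a * C, by positivity, fun N => ?_⟩
  set I : ℕ → Set ℝ := fun i => Set.Ico (1 - (2:ℝ)⁻¹ ^ i) (1 - (2:ℝ)⁻¹ ^ (i + 1)) with hI
  have hcov : Set.Ioo (0:ℝ) 1 ⊆ ⋃ i, I i := fun x hx => by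
    obtain ⟨M, h1, h2⟩ := exists_dyadic hx.1.le hx.2
    exact Set.mem_iUnion.2 ⟨M, h1, h2⟩
  have hterm : ∀ i, ∫⁻ r in I i, ENNReal.ofReal (r ^ (2 ^ N) * vw ω a r) ≤
      ENNReal.ofReal (A ^ a) *
        ENNReal.ofReal ((1 - (2:ℝ)⁻¹ ^ (i + 1)) ^ (2 ^ N) * Wd ω i ^ (1 - a)) := by
    intro i
    have hpt : ∀ r ∈ I i, ENNReal.ofReal (r ^ (2 ^ N) * vw ω a r) ≤
        ENNReal.ofReal ((1 - (2:ℝ)⁻¹ ^ (i + 1)) ^ (2 ^ N) * (A ^ a * Wd ω i ^ (-a))) *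
          ENNReal.ofReal (ω r) := by
      intro r hr
      have hr0 : 0 ≤ r := (dyadic_mem i).1.trans hr.1
      have hr1 : r < 1 := hr.2.trans (dyadic_mem (i + 1)).2
      have hωr := hω.1 r ⟨hr0, hr1⟩
      have hw : Wd ω (i + 1) ≤ wh ω r := wh_anti hω hr0 hr.2.le
      have hw' : wh ω r ^ (-a) ≤ A ^ a * Wd ω i ^ (-a) := by
        have h1 : Wd ω i ≤ A * wh ω r := by
          have := hdbl i 1
          rw [pow_one] at this
          exact this.trans (by gcongr)
        have h2 := Real.rpow_le_rpow (hW i).le h1 ha0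
        have hp := hpos r ⟨hr0, hr1⟩
        have hWi := hW i
        rw [Real.mul_rpow hA0.le hp.le] at h2
        rw [Real.rpow_neg hp.le, Real.rpow_neg hWi.le, ← div_eq_mul_inv, ← one_div,
          div_le_div_iff₀ (by positivity) (by positivity)]
        linarith
      have hlo := (dyadic_mem (i + 1)).1
      have hWi := hW i
      rw [← ENNReal.ofReal_mul (by positivity), vw_eq hr0]
      refine ENNReal.ofReal_le_ofReal ?_
      rw [← mul_assoc]
      gcongr
      exact Real.rpow_nonneg (hpos r ⟨hr0, hr1⟩).le _
      exact hr.2.le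
    have hlo := (dyadic_mem (i + 1)).1
    have hWi := hW i
    calc _ ≤ ∫⁻ r in I i, ENNReal.ofReal ((1 - (2:ℝ)⁻¹ ^ (i + 1)) ^ (2 ^ N) *
            (A ^ a * Wd ω i ^ (-a))) * ENNReal.ofReal (ω r) :=
          setLIntegral_mono' measurableSet_Ico hpt
      _ = ENNReal.ofReal ((1 - (2:ℝ)⁻¹ ^ (i + 1)) ^ (2 ^ N) * (A ^ a * Wd ω i ^ (-a))) *
            ∫⁻ r in I i, ENNReal.ofReal (ω r) := by
          rw [lintegral_const_mul _ hω.2.1.ennreal_ofReal]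
      _ ≤ ENNReal.ofReal ((1 - (2:ℝ)⁻¹ ^ (i + 1)) ^ (2 ^ N) * (A ^ a * Wd ω i ^ (-a))) *
            ENNReal.ofReal (Wd ω i) := by
          gcongr
          rw [Wd, ← lintegral_eq_wh hω (dyadic_mem i).1, setLIntegral_congr Ioo_ae_eq_Ico]
          exact lintegral_mono_set (Set.Ico_subset_Ico_right (dyadic_mem (i + 1)).2.le)
      _ = _ := by
          rw [← ENNReal.ofReal_mul (by positivity), ← ENNReal.ofReal_mul (by positivity)]
          congr 1
          rw [show (1 - a) = -a + 1 by ring, Real.rpow_add_one hWi.ne']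
          ring
  calc _ ≤ ∫⁻ r in ⋃ i, I i, ENNReal.ofReal (r ^ (2 ^ N) * vw ω a r) := lintegral_mono_set hcov
    _ ≤ ∑' i, ∫⁻ r in I i, ENNReal.ofReal (r ^ (2 ^ N) * vw ω a r) := lintegral_iUnion_le _ _
    _ ≤ ∑' i, ENNReal.ofReal (A ^ a) *
        ENNReal.ofReal ((1 - (2:ℝ)⁻¹ ^ (i + 1)) ^ (2 ^ N) * Wd ω i ^ (1 - a)) :=
      ENNReal.tsum_le_tsum hterm
    _ ≤ ENNReal.ofReal (A ^ a) * ENNReal.ofReal (C * Wd ω N ^ (1 - a)) := by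
      rw [ENNReal.tsum_mul_left]
      gcongr
      exact hsum N
    _ = _ := by
      rw [← ENNReal.ofReal_mul (by positivity), mul_assoc]

/-- Lower bound `≳ ω̂(1 - 2⁻ᴺ)` for the `2^N`-th moment of `r^e ω(r)`: restrict to `r ≥ 1 - 2⁻ᴺ`. -/
lemma moment_lower {ω : ℝ → ℝ} (hω : IsWeight ω)
    (hpos : ∀ r ∈ Set.Ico (0:ℝ) 1, 0 < wh ω r) (e N : ℕ) (hN : 1 ≤ N) :
    ENNReal.ofReal ((2:ℝ)⁻¹ ^ e * (1 / 4) * Wd ω N) ≤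
      ∫⁻ r in Set.Ioo (0:ℝ) 1, ENNReal.ofReal (r ^ e * (r ^ (2 ^ N) * ω r)) := by
  have hd := dyadic_mem N
  have hc : (1:ℝ) / 4 ≤ (1 - (2:ℝ)⁻¹ ^ N) ^ (2 ^ N) := by
    -- Bernoulli at half the exponent, squared
    obtain ⟨M, rfl⟩ := Nat.exists_eq_add_of_le' hN
    have hb := one_add_mul_le_pow (a := -((2:ℝ)⁻¹ ^ (M + 1))) (by
      have : (2:ℝ)⁻¹ ^ (M + 1) ≤ 1 := pow_le_one₀ (by norm_num) (by norm_num)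
      linarith) (2 ^ M)
    have h2 : (1:ℝ) / 2 ≤ (1 - (2:ℝ)⁻¹ ^ (M + 1)) ^ (2 ^ M) := by
      refine le_trans (le_of_eq ?_) (hb.trans (le_of_eq ?_))
      · push_cast
        rw [pow_succ, inv_pow]
        field_simp
        norm_num
      · rw [← sub_eq_add_neg]
    rw [pow_succ 2 M, pow_mul]
    nlinarith
  have hhalf : (2:ℝ)⁻¹ ≤ 1 - (2:ℝ)⁻¹ ^ N := by
    have : (2:ℝ)⁻¹ ^ N ≤ (2:ℝ)⁻¹ ^ 1 := pow_le_pow_of_le_one (by norm_num) (by norm_num) hN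
    norm_num at this ⊢
    linarith
  have hW := Wd_pos hpos (ω := ω) N
  calc _ = ENNReal.ofReal ((2:ℝ)⁻¹ ^ e * (1 / 4)) *
        ∫⁻ r in Set.Ioo (1 - (2:ℝ)⁻¹ ^ N) 1, ENNReal.ofReal (ω r) := by
        rw [lintegral_eq_wh hω hd.1, ← ENNReal.ofReal_mul (by positivity), Wd]
    _ = ∫⁻ r in Set.Ioo (1 - (2:ℝ)⁻¹ ^ N) 1, ENNReal.ofReal ((2:ℝ)⁻¹ ^ e * (1 / 4)) *
          ENNReal.ofReal (ω r) := by
        rw [lintegral_const_mul _ hω.2.1.ennreal_ofReal]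
    _ ≤ ∫⁻ r in Set.Ioo (1 - (2:ℝ)⁻¹ ^ N) 1, ENNReal.ofReal (r ^ e * (r ^ (2 ^ N) * ω r)) := by
        refine setLIntegral_mono' measurableSet_Ioo fun r hr => ?_
        have hr0 : 0 ≤ r := hd.1.trans hr.1.le
        have := hω.1 r ⟨hr0, hr.2⟩
        rw [← ENNReal.ofReal_mul (by positivity)]
        refine ENNReal.ofReal_le_ofReal ?_
        rw [← mul_assoc]
        gcongr
        · linarith [hr.1]
        · exact hc.trans (pow_le_pow_left₀ hd.1 hr.1.le _)
    _ ≤ _ := lintegral_mono_set (Set.Ioo_subset_Ioo_left hd.1)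

/-! ### `L¹` norms of trigonometric polynomials -/

open Complex in
lemma integral_exp_int (m : ℤ) :
    ∫ θ in (-Real.pi)..Real.pi, exp ((m:ℂ) * I * θ) = if m = 0 then (2 * Real.pi : ℂ) else 0 := by
  split_ifs with h
  · subst h; simp; ring
  · rw [integral_exp_mul_complex (mul_ne_zero (Int.cast_ne_zero.2 h) I_ne_zero)]
    have : exp ((m:ℂ) * I * (Real.pi:ℝ)) = exp ((m:ℂ) * I * ((-Real.pi : ℝ):ℂ)) := by
      rw [Complex.exp_eq_exp_iff_exists_int]
      exact ⟨m, by push_cast; ring⟩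
    rw [this]; simp

open Complex in
lemma parseval_trig (N : ℕ) (β : ℕ → ℂ) :
    ∫ θ in (-Real.pi)..Real.pi, ‖∑ k ∈ Finset.range N, β k * exp (k * I * θ)‖ ^ 2 =
      2 * Real.pi * ∑ k ∈ Finset.range N, ‖β k‖ ^ 2 := by
  have h1 : ∀ θ : ℝ, ((‖∑ k ∈ Finset.range N, β k * exp (k * I * θ)‖ ^ 2 : ℝ) : ℂ) =
      ∑ k ∈ Finset.range N, ∑ l ∈ Finset.range N,
        (β k * (starRingEnd ℂ) (β l)) * exp (((k - l : ℤ) : ℂ) * I * θ) := by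
    intro θ
    push_cast
    rw [← Complex.mul_conj', map_sum, Finset.sum_mul_sum]
    refine Finset.sum_congr rfl fun k _ => Finset.sum_congr rfl fun l _ => ?_
    rw [map_mul, ← Complex.exp_conj]
    simp only [map_mul, conj_I, conj_ofReal, map_natCast]
    rw [mul_mul_mul_comm, ← Complex.exp_add]
    congr 2
    ring
  have h2 : ∀ k l : ℕ, IntervalIntegrable (fun θ : ℝ => (β k * (starRingEnd ℂ) (β l)) *
      exp (((k - l : ℤ) : ℂ) * I * θ)) volume (-Real.pi) Real.pi := fun k l =>
    Continuous.intervalIntegrable (by fun_prop) _ _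
  apply Complex.ofReal_injective
  rw [← intervalIntegral.integral_ofReal]
  simp_rw [h1]
  rw [intervalIntegral.integral_finsetSum]
  · have hrhs : ((2 * Real.pi * ∑ k ∈ Finset.range N, ‖β k‖ ^ 2 : ℝ) : ℂ) =
        ∑ k ∈ Finset.range N, 2 * (Real.pi : ℂ) * (‖β k‖ : ℂ) ^ 2 := by
      push_cast
      rw [Finset.mul_sum]
    rw [hrhs]
    refine Finset.sum_congr rfl fun k hk => ?_
    rw [intervalIntegral.integral_finsetSum (fun l _ => h2 k l)]
    simp_rw [intervalIntegral.integral_const_mul, integral_exp_int]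
    rw [Finset.sum_eq_single_of_mem k hk]
    · simp only [sub_self, if_true]
      rw [Complex.mul_conj']; ring
    · intro l _ hl
      rw [if_neg, mul_zero]
      omega
  · intro k _
    exact Continuous.intervalIntegrable (by fun_prop) _ _

/-- `|1 - e^{iθ}| ≥ |θ| / 2` on `[-π, π]`. -/
lemma norm_one_sub_exp_ge {θ : ℝ} (h : |θ| ≤ Real.pi) :
    |θ| / 2 ≤ ‖1 - Complex.exp (Complex.I * θ)‖ := by
  rw [norm_sub_rev, Complex.norm_exp_I_mul_ofReal_sub_one, Real.norm_eq_abs, abs_mul, abs_two]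
  have h2 : |θ / 2| ≤ Real.pi / 2 := by rw [abs_div, abs_two]; linarith
  have h3 := Real.mul_abs_le_abs_sin h2
  rw [abs_div, abs_two] at h3
  have h4 : 2 / Real.pi * (|θ| / 2) * 4 ≥ |θ| := by
    rw [ge_iff_le, div_mul_div_comm, div_mul_eq_mul_div, le_div_iff₀ (by positivity)]
    have := Real.pi_le_four
    nlinarith [abs_nonneg θ]
  linarith

lemma integral_inv_one_add (m : ℝ) (hm : 0 < m) :
    ∫ θ in (-Real.pi)..Real.pi, (1 + (m * θ) ^ 2)⁻¹ ≤ Real.pi / m := by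
  rw [intervalIntegral.integral_comp_mul_left (fun x => (1 + x ^ 2)⁻¹) hm.ne',
    integral_inv_one_add_sq, smul_eq_mul, inv_mul_eq_div]
  gcongr
  have h1 := Real.arctan_lt_pi_div_two (m * Real.pi)
  have h2 := Real.neg_pi_div_two_lt_arctan (m * -Real.pi)
  linarith

open Complex in
/-- A trigonometric polynomial with coefficients of size `D`, of degree `≲ m`, and whose
coefficients vary by at most `D / m` at each step, has `L¹` norm `≲ D`. The proof splits
`|p|` by the arithmetic-geometric inequality against the weight `1 + (m θ)²`, bounds `θ² |p|²` through
`|1 - e^{iθ}| |p|` (summation by parts), and applies Parseval to both squares. -/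
lemma trig_L1 (m N : ℕ) (hm : 0 < m) (hN : N ≤ 4 * m) (D : ℝ) (hD : 0 < D) (β : ℕ → ℂ)
    (h0 : β 0 = 0) (hβN : β N = 0) (hb : ∀ k, ‖β k‖ ≤ D)
    (hd : ∀ k < N, ‖β (k + 1) - β k‖ ≤ D / m) :
    ∫ θ in (-Real.pi)..Real.pi, ‖∑ k ∈ Finset.range N, β k * exp (k * I * θ)‖
      ≤ 100 * D := by
  set p : ℝ → ℂ := fun θ => ∑ k ∈ Finset.range N, β k * exp (k * I * θ) with hp
  have hpc : Continuous p := by fun_prop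
  have hm' : (0:ℝ) < m := by exact_mod_cast hm
  set r : ℝ → ℂ := fun θ => ∑ k ∈ Finset.range N, (β (k + 1) - β k) * exp (k * I * θ) with hr
  have hrc : Continuous r := by fun_prop
  -- Summation by parts; the boundary terms vanish because `β 0 = β N = 0`.
  have hrel : ∀ θ : ℝ, (1 - exp (I * θ)) * p θ = exp (I * θ) * r θ := by
    intro θ
    have e1 : exp (I * θ) * r θ = ∑ k ∈ Finset.range N, β (k + 1) * exp ((k + 1 : ℕ) * I * θ)
        - exp (I * θ) * p θ := by
      simp only [hr, hp, Finset.mul_sum, ← Finset.sum_sub_distrib]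
      refine Finset.sum_congr rfl fun k _ => ?_
      have : exp (((k + 1 : ℕ) : ℂ) * I * θ) = exp (I * θ) * exp (k * I * θ) := by
        rw [← Complex.exp_add]; push_cast; ring_nf
      rw [this]; ring
    have e2 : ∑ k ∈ Finset.range N, β (k + 1) * exp ((k + 1 : ℕ) * I * θ) = p θ := by
      have h1 := Finset.sum_range_succ' (fun k => β k * exp (k * I * θ)) N
      have h2 := Finset.sum_range_succ (fun k => β k * exp (k * I * θ)) N
      rw [h2] at h1
      simp only [h0, hβN, zero_mul, add_zero] at h1
      exact h1.symm
    rw [e1, e2]; ring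
  have hIp : ∫ θ in (-Real.pi)..Real.pi, ‖p θ‖ ^ 2 ≤ 2 * Real.pi * (4 * m * D ^ 2) := by
    rw [parseval_trig]
    gcongr
    calc _ ≤ ∑ k ∈ Finset.range N, D ^ 2 := by gcongr; exact hb _
      _ ≤ _ := by
        rw [Finset.sum_const, Finset.card_range, nsmul_eq_mul]; gcongr; exact_mod_cast hN
  have hIr : ∫ θ in (-Real.pi)..Real.pi, ‖r θ‖ ^ 2 ≤ 2 * Real.pi * (4 * m * (D / m) ^ 2) := by
    rw [parseval_trig N (fun k => β (k + 1) - β k)]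
    gcongr
    calc _ ≤ ∑ k ∈ Finset.range N, (D / m) ^ 2 := by
          gcongr with k hk; exact hd k (Finset.mem_range.1 hk)
      _ ≤ _ := by
        rw [Finset.sum_const, Finset.card_range, nsmul_eq_mul]; gcongr; exact_mod_cast hN
  -- pointwise `2 |p| ≤ (|p|² P) / (m D) + m D / P` with `P = 1 + (m θ)²`
  have hpt : ∀ θ ∈ Set.Icc (-Real.pi) Real.pi, ‖p θ‖ ≤
      (1 / (2 * m * D)) * ‖p θ‖ ^ 2 + (2 * m / D) * ‖r θ‖ ^ 2
        + (m * D / 2) * (1 + (m * θ) ^ 2)⁻¹ := by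
    intro θ hθ
    have h1 : |θ| / 2 * ‖p θ‖ ≤ ‖r θ‖ := by
      have := congrArg norm (hrel θ)
      rw [norm_mul, norm_mul, mul_comm I, norm_exp_ofReal_mul_I, one_mul, mul_comm _ I] at this
      rw [← this]
      gcongr
      exact norm_one_sub_exp_ge (abs_le.2 hθ)
    have h2 : θ ^ 2 * ‖p θ‖ ^ 2 ≤ 4 * ‖r θ‖ ^ 2 := by
      have := pow_le_pow_left₀ (by positivity) h1 2
      rw [mul_pow, div_pow, sq_abs] at this
      linarith
    have hP : 0 < 1 + (m * θ) ^ 2 := by positivity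
    set P := 1 + (m * θ) ^ 2 with hPdef
    have h3 : ‖p θ‖ ≤ (1 / (2 * m * D)) * (‖p θ‖ ^ 2 * P) + (m * D / 2) * P⁻¹ := by
      have : 0 ≤ (‖p θ‖ * P - m * D) ^ 2 := sq_nonneg _
      have e : (1 / (2 * m * D)) * (‖p θ‖ ^ 2 * P) + (m * D / 2) * P⁻¹ - ‖p θ‖ =
        (‖p θ‖ * P - m * D) ^ 2 / (2 * m * D * P) := by field_simp; ring
      have : 0 ≤ (‖p θ‖ * P - m * D) ^ 2 / (2 * m * D * P) := by positivity
      linarith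
    refine h3.trans ?_
    gcongr ?_ + _
    have e : (1 / (2 * m * D)) * (‖p θ‖ ^ 2 * P) = (1 / (2 * m * D)) * ‖p θ‖ ^ 2
      + (m / (2 * D)) * (θ ^ 2 * ‖p θ‖ ^ 2) := by rw [hPdef]; field_simp
    rw [e]
    refine add_le_add le_rfl ?_
    calc _ ≤ (m / (2 * D)) * (4 * ‖r θ‖ ^ 2) := by gcongr
      _ = _ := by field_simp; ring
  have hpi := Real.pi_pos
  have i1 : IntervalIntegrable (fun θ => (1 / (2 * m * D)) * ‖p θ‖ ^ 2) volume
      (-Real.pi) Real.pi := Continuous.intervalIntegrable (by fun_prop) _ _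
  have i2 : IntervalIntegrable (fun θ => (2 * m / D) * ‖r θ‖ ^ 2) volume
      (-Real.pi) Real.pi := Continuous.intervalIntegrable (by fun_prop) _ _
  have i3 : IntervalIntegrable (fun θ : ℝ => (m * D / 2) * (1 + (m * θ) ^ 2)⁻¹) volume
      (-Real.pi) Real.pi := Continuous.intervalIntegrable
        (continuous_const.mul (Continuous.inv₀ (by fun_prop) fun θ => by positivity)) _ _
  calc _ ≤ ∫ θ in (-Real.pi)..Real.pi, ((1 / (2 * m * D)) * ‖p θ‖ ^ 2 + (2 * m / D) * ‖r θ‖ ^ 2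
        + (m * D / 2) * (1 + (m * θ) ^ 2)⁻¹) :=
      intervalIntegral.integral_mono_on (by linarith)
        (Continuous.intervalIntegrable (by fun_prop) _ _) ((i1.add i2).add i3) hpt
    _ = (1 / (2 * m * D)) * (∫ θ in (-Real.pi)..Real.pi, ‖p θ‖ ^ 2)
        + (2 * m / D) * (∫ θ in (-Real.pi)..Real.pi, ‖r θ‖ ^ 2)
        + (m * D / 2) * ∫ θ in (-Real.pi)..Real.pi, (1 + (m * θ) ^ 2)⁻¹ := by
      rw [intervalIntegral.integral_add (i1.add i2) i3, intervalIntegral.integral_add i1 i2]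
      simp only [intervalIntegral.integral_const_mul]
    _ ≤ (1 / (2 * m * D)) * (2 * Real.pi * (4 * m * D ^ 2))
        + (2 * m / D) * (2 * Real.pi * (4 * m * (D / m) ^ 2)) + (m * D / 2) * (Real.pi / m) := by
      gcongr
      exact integral_inv_one_add m hm'
    _ = Real.pi * (41 / 2) * D := by field_simp; ring
    _ ≤ 100 * D := by
      gcongr
      have := Real.pi_lt_d2
      linarith

/-! ### Polar coordinates and spherical moments -/

/-- The normalized volume is a Haar measure, so that polar coordinates are available. -/
instance nV_haar (n : ℕ) : (nV n).IsAddHaarMeasure := by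
  unfold nV
  apply Measure.IsAddHaarMeasure.smul
  · exact ENNReal.inv_ne_zero.2 measure_ball_lt_top.ne
  · exact ENNReal.inv_ne_top.2 (measure_ball_pos _ _ one_pos).ne'

theorem finrank_En (n : ℕ) : Module.finrank ℝ (En n) = 2 * n := by
  rw [← Module.finrank_mul_finrank ℝ ℂ (En n)]
  simp

/-- The moments `∫ |ζ_i|^m dσ(ζ)` of a coordinate over the unit sphere. -/
def sm (n : ℕ) (i : Fin n) (m : ℕ) : ℝ :=
  ∫ ζ : sphere (0 : En n) 1, ‖(ζ : En n) i‖ ^ m ∂((nV n).toSphere)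

theorem sm_lintegral (n : ℕ) (i : Fin n) (m : ℕ) :
    ∫⁻ ζ : sphere (0 : En n) 1, ENNReal.ofReal (‖(ζ : En n) i‖ ^ m) ∂((nV n).toSphere)
      = ENNReal.ofReal (sm n i m) := by
  rw [sm, ofReal_integral_eq_lintegral_ofReal]
  · refine Integrable.of_bound (C := 1) (Continuous.aestronglyMeasurable (by fun_prop)) ?_
    filter_upwards with ζ
    have h1 : ‖(ζ : En n)‖ = 1 := by simp
    have := PiLp.norm_apply_le (ζ : En n) i
    rw [h1] at this
    rw [norm_pow, norm_norm]
    exact pow_le_one₀ (norm_nonneg _) this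
  · filter_upwards with ζ
    positivity

theorem coord_polar (n : ℕ) (i : Fin n) (x : ({0}ᶜ : Set (En n))) :
    ‖(x : En n) i‖ = ‖((homeomorphUnitSphereProd (En n) x).1 : En n) i‖ *
      ((homeomorphUnitSphereProd (En n) x).2 : ℝ) := by
  have hx : ‖(x : En n)‖ ≠ 0 := norm_ne_zero_iff.2 x.2
  rw [homeomorphUnitSphereProd_apply_fst_coe, homeomorphUnitSphereProd_apply_snd_coe]
  simp
  field_simp

/-- Polar coordinates for `|z_i|^m h(|z|)`: the spherical and the radial factors separate. -/
theorem polar_lintegral (n : ℕ) (i : Fin n) (m : ℕ) (h : ℝ → ENNReal) (hh : Measurable h) :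
    ∫⁻ z, ENNReal.ofReal (‖z i‖ ^ m) * h ‖z‖ ∂(nV n) =
      ENNReal.ofReal (sm n i m) *
        ∫⁻ r in Set.Ioi (0:ℝ), ENNReal.ofReal (r ^ (2 * n - 1)) * (ENNReal.ofReal (r ^ m) * h r) := by
  have : Nonempty (Fin n) := ⟨i⟩
  have : Nontrivial (En n) := inferInstance
  have hmp := (nV n).measurePreserving_homeomorphUnitSphereProd
  calc
    ∫⁻ z, ENNReal.ofReal (‖z i‖ ^ m) * h ‖z‖ ∂(nV n)
      = ∫⁻ x : ({(0)}ᶜ : Set (En n)), ENNReal.ofReal (‖x.1 i‖ ^ m) * h ‖x.1‖ ∂((nV n).comap (↑)) := by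
      rw [lintegral_subtype_comap (measurableSet_singleton _).compl
        (fun z : En n => ENNReal.ofReal (‖z i‖ ^ m) * h ‖z‖), restrict_compl_singleton]
    _ = ∫⁻ p, ENNReal.ofReal (‖(p.1 : En n) i‖ ^ m) *
          (ENNReal.ofReal ((p.2 : ℝ) ^ m) * h p.2)
          ∂(nV n).toSphere.prod (.volumeIoiPow (Module.finrank ℝ (En n) - 1)) := by
      rw [← hmp.lintegral_comp_emb (Homeomorph.measurableEmbedding _)]
      refine lintegral_congr fun x => ?_
      rw [coord_polar, mul_pow, ENNReal.ofReal_mul (by positivity), mul_assoc]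
      simp
    _ = ENNReal.ofReal (sm n i m) * ∫⁻ r : Set.Ioi (0:ℝ), (ENNReal.ofReal ((r : ℝ) ^ m) * h r)
          ∂(.volumeIoiPow (2 * n - 1)) := by
      rw [lintegral_prod_mul (f := fun ζ : sphere (0 : En n) 1 => ENNReal.ofReal (‖(ζ : En n) i‖ ^ m))
        (g := fun r : Set.Ioi (0:ℝ) => ENNReal.ofReal ((r : ℝ) ^ m) * h r)]
      · rw [sm_lintegral, finrank_En]
      · exact (ENNReal.measurable_ofReal.comp (Continuous.measurable (by fun_prop))).aemeasurable
      · exact Measurable.aemeasurable (by fun_prop)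
    _ = _ := by
      congr 1
      rw [Measure.volumeIoiPow, lintegral_withDensity_eq_lintegral_mul _ (by fun_prop) (by fun_prop)]
      rw [← lintegral_subtype_comap measurableSet_Ioi]
      rfl

theorem polar_gauss (n : ℕ) (i : Fin n) (m : ℕ) :
    ∫ z, ‖z i‖ ^ m * Real.exp (-‖z‖^2) ∂(nV n) =
      sm n i m * ∫ r in Set.Ioi (0:ℝ), r ^ (2 * n - 1) * (r ^ m * Real.exp (-r^2)) := by
  have h := polar_lintegral n i m (fun r => ENNReal.ofReal (Real.exp (-r^2))) (by fun_prop)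
  have hs : 0 ≤ sm n i m := integral_nonneg fun _ => by positivity
  rw [integral_eq_lintegral_of_nonneg_ae (Eventually.of_forall fun z => by positivity)
    (Continuous.aestronglyMeasurable (by fun_prop)),
    integral_eq_lintegral_of_nonneg_ae]
  · have e1 : ∫⁻ z, ENNReal.ofReal (‖z i‖ ^ m * Real.exp (-‖z‖^2)) ∂(nV n)
      = ∫⁻ z, ENNReal.ofReal (‖z i‖ ^ m) * ENNReal.ofReal (Real.exp (-‖z‖^2)) ∂(nV n) :=
      lintegral_congr fun z => ENNReal.ofReal_mul (by positivity)
    rw [e1, h, ENNReal.toReal_mul, ENNReal.toReal_ofReal hs]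
    congr 2
    refine setLIntegral_congr_fun measurableSet_Ioi fun r hr => ?_
    have hr' : (0:ℝ) < r := hr
    rw [← ENNReal.ofReal_mul (by positivity), ← ENNReal.ofReal_mul (by positivity)]
  · filter_upwards [ae_restrict_mem measurableSet_Ioi] with r hr
    have hr' : (0:ℝ) < r := hr
    simp only [Pi.zero_apply]
    positivity
  · exact Continuous.aestronglyMeasurable (by fun_prop)

/-- Up to a constant, `∫ |ζ_i|^{2k} dσ = k! / (k + n - 1)!`. Integrating `|z_i|^{2k} e^{-|z|²}` in polar
coordinates and as a product over the coordinates and comparing the results gives this. -/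
theorem sm_formula (n : ℕ) (i : Fin n) : ∃ c : ℝ, 0 < c ∧ ∀ k : ℕ,
    sm n i (2 * k) * (k + (n - 1)).factorial = c * k.factorial := by
  set e : En n ≃L[ℝ] (Fin n → ℂ) := PiLp.continuousLinearEquiv 2 ℝ (fun _ : Fin n => ℂ)
  set ν : Measure (Fin n → ℂ) := (nV n).map e
  have : ν.IsAddHaarMeasure := e.isAddHaarMeasure_map (nV n)
  set c := Measure.addHaarScalarFactor ν volume
  have hc : ν = c • volume := Measure.isAddLeftInvariant_eq_smul ν volume
  have hcpos : 0 < c := Measure.addHaarScalarFactor_pos_of_isAddHaarMeasure _ _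
  have hn : 1 ≤ n := i.pos
  have hG : ∀ k : ℕ, ∫ z, ‖z i‖ ^ (2 * k) * Real.exp (-‖z‖^2) ∂(nV n)
      = c * (Real.pi ^ n * k.factorial) := by
    intro k
    have h1 : ∫ z, ‖z i‖ ^ (2 * k) * Real.exp (-‖z‖^2) ∂(nV n)
        = ∫ x, ∏ j, (‖x j‖ ^ (if j = i then 2 * k else 0) * Real.exp (-‖x j‖^2)) ∂ν := by
      rw [show ν = (nV n).map e.toHomeomorph.toMeasurableEquiv from rfl, integral_map_equiv]
      refine integral_congr_ae (Eventually.of_forall fun z => ?_)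
      change ‖z i‖ ^ (2 * k) * Real.exp (-‖z‖^2) =
        ∏ j, (‖z j‖ ^ (if j = i then 2 * k else 0) * Real.exp (-‖z j‖^2))
      rw [Finset.prod_mul_distrib, ← Real.exp_sum, EuclideanSpace.norm_sq_eq, Finset.sum_neg_distrib]
      congr 1
      simp [pow_ite, Finset.prod_ite_eq']
    have h2 : ∀ m : ℕ, ∫ x : ℂ, ‖x‖ ^ (2 * m) * Real.exp (-‖x‖^2) = Real.pi * m.factorial := by
      intro m
      have := Complex.integral_rpow_mul_exp_neg_rpow (p := 2) (q := (2 * m : ℕ)) (by norm_num)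
        (by have : (0:ℝ) ≤ (2 * m : ℕ) := by positivity
            linarith)
      simp only [Real.rpow_natCast, Real.rpow_ofNat] at this
      rw [this, show (((2 * m : ℕ) : ℝ) + 2) / 2 = m + 1 by push_cast; ring, Real.Gamma_nat_eq_factorial]
      ring
    rw [h1, hc, integral_smul_nnreal_measure, integral_fintype_prod_volume_eq_prod
      (fun j (x : ℂ) => ‖x‖ ^ (if j = i then 2 * k else 0) * Real.exp (-‖x‖^2))]
    rw [NNReal.smul_def, smul_eq_mul]
    congr 1
    have h3 : ∀ j, ∫ x : ℂ, ‖x‖ ^ (if j = i then 2 * k else 0) * Real.exp (-‖x‖^2)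
        = Real.pi * (if j = i then (k.factorial : ℝ) else 1) := by
      intro j
      split_ifs with h
      · exact h2 k
      · simpa using h2 0
    simp_rw [h3]
    rw [Finset.prod_mul_distrib]
    simp
  refine ⟨c * Real.pi ^ n * 2, by positivity, fun k => ?_⟩
  have h1 := hG k
  rw [polar_gauss] at h1
  have h2 : ∫ r in Set.Ioi (0:ℝ), r ^ (2 * n - 1) * (r ^ (2 * k) * Real.exp (-r^2))
      = 1 / 2 * (k + (n - 1)).factorial := by
    have := integral_rpow_mul_exp_neg_rpow (p := 2) (q := (2 * n - 1 + 2 * k : ℕ)) (by norm_num)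
        (by have : (0:ℝ) ≤ (2 * n - 1 + 2 * k : ℕ) := by positivity
            linarith)
    simp only [Real.rpow_natCast, Real.rpow_ofNat] at this
    rw [show (((2 * n - 1 + 2 * k : ℕ) : ℝ) + 1) / 2 = ((k + (n - 1) : ℕ) : ℝ) + 1 by
      rw [show 2 * n - 1 + 2 * k = 2 * (k + (n-1)) + 1 by omega]
      push_cast; ring, Real.Gamma_nat_eq_factorial] at this
    rw [← this]
    congr 1
    ext r
    rw [pow_add]; ring
  rw [h2] at h1
  linarith

theorem factorial_ineq (k m : ℕ) :
    k.factorial * (2 * k + m).factorial ≤ 2 ^ m * ((2 * k).factorial * (k + m).factorial) := by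
  induction m with
  | zero => simp [mul_comm]
  | succ m ih =>
    rw [← add_assoc, ← add_assoc, Nat.factorial_succ, Nat.factorial_succ]
    calc k.factorial * ((2 * k + m + 1) * (2 * k + m).factorial)
        = (2 * k + m + 1) * (k.factorial * (2 * k + m).factorial) := by ring
      _ ≤ (2 * (k + m + 1)) * (2 ^ m * ((2 * k).factorial * (k + m).factorial)) := by
          apply Nat.mul_le_mul (by omega) ih
      _ = _ := by ring

theorem sm_pos (n : ℕ) (i : Fin n) (k : ℕ) : 0 < sm n i (2 * k) := by
  obtain ⟨c, hc, h⟩ := sm_formula n i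
  have h1 := h k
  have : (0:ℝ) < c * k.factorial := by positivity
  rw [← h1] at this
  exact pos_of_mul_pos_left this (by positivity)

/-- The spherical moments decay polynomially: doubling the order costs at most `2^(n-1)`. -/
theorem sm_doubling (n : ℕ) (i : Fin n) (k : ℕ) :
    sm n i (2 * k) ≤ 2 ^ (n - 1) * sm n i (2 * (2 * k)) := by
  obtain ⟨c, hc, h⟩ := sm_formula n i
  have h1 := h k
  have h2 := h (2 * k)
  have h3 : ((k.factorial * (2 * k + (n-1)).factorial : ℕ) : ℝ) ≤
    (2 ^ (n-1) * ((2 * k).factorial * (k + (n-1)).factorial) : ℕ) := by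
    exact_mod_cast factorial_ineq k (n-1)
  push_cast at h3
  set A : ℝ := ((k + (n - 1)).factorial : ℝ)
  set D : ℝ := ((2 * k + (n - 1)).factorial : ℝ)
  have hA : 0 < A := by positivity
  have hD : 0 < D := by positivity
  have : sm n i (2 * k) * (A * D) ≤ (2 ^ (n - 1) * sm n i (2 * (2 * k))) * (A * D) := by
    calc sm n i (2 * k) * (A * D) = c * (k.factorial * D) := by rw [← mul_assoc, h1]; ring
      _ ≤ c * (2 ^ (n-1) * ((2 * k).factorial * A)) := by gcongr
      _ = 2 ^ (n-1) * (c * (2 * k).factorial) * A := by ring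
      _ = _ := by rw [← h2]; ring
  exact le_of_mul_le_mul_right this (by positivity)

/-! ### Norms of monomials -/

theorem measurableSet_Bl (n : ℕ) : MeasurableSet (Bl n) := measurableSet_ball

/-- Polar coordinates on the ball for `|w_i|^m v(|w|)`. -/
theorem ball_polar (n : ℕ) (i : Fin n) (m : ℕ) (v : ℝ → ℝ) (hv : Measurable v) :
    ∫⁻ w in Bl n, ENNReal.ofReal (‖w i‖ ^ m * v ‖w‖) ∂(nV n) =
      ENNReal.ofReal (sm n i m) *
        ∫⁻ r in Set.Ioo (0:ℝ) 1, ENNReal.ofReal (r ^ (2 * n - 1) * (r ^ m * v r)) := by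
  have h := polar_lintegral n i m ((Set.Iio 1).indicator fun r => ENNReal.ofReal (v r))
    ((ENNReal.measurable_ofReal.comp hv).indicator measurableSet_Iio)
  rw [← lintegral_indicator (measurableSet_Bl n)]
  calc _ = ∫⁻ z, ENNReal.ofReal (‖z i‖ ^ m) *
        ((Set.Iio 1).indicator fun r => ENNReal.ofReal (v r)) ‖z‖ ∂(nV n) := by
        refine lintegral_congr fun z => ?_
        by_cases hz : ‖z‖ < 1
        · rw [Set.indicator_of_mem (by simpa [Bl] using hz), Set.indicator_of_mem (by simpa using hz),
            ENNReal.ofReal_mul (by positivity)]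
        · rw [Set.indicator_of_notMem (by simpa [Bl] using hz),
            Set.indicator_of_notMem (by simpa using hz), mul_zero]
    _ = _ := by
        rw [h]
        congr 1
        rw [← lintegral_indicator measurableSet_Ioo, ← lintegral_indicator measurableSet_Ioi]
        refine lintegral_congr fun r => ?_
        by_cases h0 : 0 < r
        · rw [Set.indicator_of_mem (by simpa using h0)]
          by_cases h1 : r < 1
          · rw [Set.indicator_of_mem (by simpa using h1),
              Set.indicator_of_mem (show r ∈ Set.Ioo (0:ℝ) 1 from ⟨h0, h1⟩),
              ENNReal.ofReal_mul (by positivity), ENNReal.ofReal_mul (by positivity)]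
          · rw [Set.indicator_of_notMem (by simpa using h1),
              Set.indicator_of_notMem (fun h : r ∈ Set.Ioo (0:ℝ) 1 => h1 h.2)]
            simp
        · rw [Set.indicator_of_notMem (by simpa using h0),
            Set.indicator_of_notMem (fun h : r ∈ Set.Ioo (0:ℝ) 1 => h0 h.1)]

theorem weight_integrable (n : ℕ) (hn : 1 ≤ n) {ω : ℝ → ℝ} (hω : IsWeight ω) :
    IntegrableOn (fun w : En n => ω ‖w‖) (Bl n) (nV n) := by
  have : Nonempty (Fin n) := ⟨⟨0, hn⟩⟩
  have : Nontrivial (En n) := inferInstance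
  rw [Bl, integrableOn_fun_norm_addHaar]
  refine Integrable.mono (hω.2.2.mono_set Set.Ioo_subset_Ico_self)
    (Measurable.aestronglyMeasurable ((measurable_id.pow_const _).smul hω.2.1)) ?_
  filter_upwards [ae_restrict_mem measurableSet_Ioo] with r hr
  rw [norm_smul, norm_pow]
  apply mul_le_of_le_one_left (norm_nonneg _)
  apply pow_le_one₀ (norm_nonneg _)
  rw [Real.norm_of_nonneg hr.1.le]
  exact hr.2.le

/-- The squared norm `∫_𝔹 |w_i|^{2k} ω dV` of the monomial `w_i^k` in `A²_ω`. -/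
def dd (n : ℕ) (ω : ℝ → ℝ) (i : Fin n) (k : ℕ) : ℝ :=
  ∫ w in Bl n, ‖w i‖ ^ (2 * k) * ω ‖w‖ ∂(nV n)

theorem norm_mem_Ico {n : ℕ} {w : En n} (hw : w ∈ Bl n) : ‖w‖ ∈ Set.Ico (0:ℝ) 1 :=
  ⟨norm_nonneg _, by simpa [Bl] using hw⟩

theorem coord_le {n : ℕ} {w : En n} (hw : w ∈ Bl n) (i : Fin n) : ‖w i‖ ≤ 1 :=
  (PiLp.norm_apply_le w i).trans (norm_mem_Ico hw).2.le

theorem dd_integrable (n : ℕ) {ω : ℝ → ℝ} (hω : IsWeight ω) (i : Fin n) (m : ℕ) :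
    IntegrableOn (fun w : En n => ‖w i‖ ^ m * ω ‖w‖) (Bl n) (nV n) := by
  refine Integrable.mono (weight_integrable n i.pos hω)
    (((Continuous.measurable (by fun_prop)).mul (hω.2.1.comp measurable_norm)).aestronglyMeasurable) ?_
  filter_upwards [ae_restrict_mem (measurableSet_Bl n)] with w hw
  rw [norm_mul, norm_pow, norm_norm]
  exact mul_le_of_le_one_left (norm_nonneg _) (pow_le_one₀ (norm_nonneg _) (coord_le hw i))

theorem dd_lintegral (n : ℕ) {ω : ℝ → ℝ} (hω : IsWeight ω) (i : Fin n) (k : ℕ) :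
    ENNReal.ofReal (dd n ω i k) =
      ∫⁻ w in Bl n, ENNReal.ofReal (‖w i‖ ^ (2 * k) * ω ‖w‖) ∂(nV n) := by
  rw [dd, ofReal_integral_eq_lintegral_ofReal (dd_integrable n hω i _)]
  filter_upwards [ae_restrict_mem (measurableSet_Bl n)] with w hw
  exact mul_nonneg (by positivity) (hω.1 _ (norm_mem_Ico hw))

theorem dd_nonneg (n : ℕ) {ω : ℝ → ℝ} (hω : IsWeight ω) (i : Fin n) (k : ℕ) : 0 ≤ dd n ω i k :=
  setIntegral_nonneg measurableSet_ball fun _ hw =>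
    mul_nonneg (by positivity) (hω.1 _ (norm_mem_Ico hw))

theorem dd_anti (n : ℕ) {ω : ℝ → ℝ} (hω : IsWeight ω) (i : Fin n) {k l : ℕ} (h : k ≤ l) :
    dd n ω i l ≤ dd n ω i k := by
  refine setIntegral_mono_on (dd_integrable n hω i _) (dd_integrable n hω i _) measurableSet_ball ?_
  intro w hw
  exact mul_le_mul_of_nonneg_right (pow_le_pow_of_le_one (norm_nonneg _) (coord_le hw i) (by omega))
    (hω.1 _ (norm_mem_Ico hw))

/-- `(j + 1) x^j (1 - x) ≤ 1 - x^(j+1) ≤ 1`. -/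
theorem pow_mul_one_sub_le {x : ℝ} (h0 : 0 ≤ x) (h1 : x ≤ 1) (j : ℕ) :
    x ^ j * (1 - x) ≤ 1 / (j + 1) := by
  rw [le_div_iff₀ (by positivity)]
  have h2 : ∑ _l ∈ Finset.range (j + 1), x ^ j ≤ ∑ l ∈ Finset.range (j + 1), x ^ l :=
    Finset.sum_le_sum fun l hl =>
      pow_le_pow_of_le_one h0 h1 (by have := Finset.mem_range.1 hl; omega)
  have h3 := mul_neg_geom_sum x (j + 1)
  simp at h2
  nlinarith [pow_nonneg h0 (j+1)]

/-- The differences of the moments gain a factor `1 / j`, because `x^j (1 - x) ≤ 1 / (j + 1)` with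
`x = |w_i|²`. -/
theorem dd_diff (n : ℕ) {ω : ℝ → ℝ} (hω : IsWeight ω) (i : Fin n) (l j : ℕ) :
    dd n ω i (l + j) - dd n ω i (l + j + 1) ≤ dd n ω i l / (j + 1) := by
  rw [dd, dd, dd, ← integral_sub (dd_integrable n hω i _) (dd_integrable n hω i _), ← integral_div]
  refine setIntegral_mono_on ((dd_integrable n hω i _).sub (dd_integrable n hω i _))
    ((dd_integrable n hω i _).div_const _) measurableSet_ball ?_
  intro w hw
  have hω0 := hω.1 _ (norm_mem_Ico hw)
  have h := pow_mul_one_sub_le (x := ‖w i‖^2) (by positivity)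
    (pow_le_one₀ (norm_nonneg _) (coord_le hw i)) j
  calc _ = ‖w i‖ ^ (2 * l) * ω ‖w‖ * ((‖w i‖^2) ^ j * (1 - ‖w i‖^2)) := by ring
    _ ≤ ‖w i‖ ^ (2 * l) * ω ‖w‖ * (1 / (j + 1)) := by gcongr
    _ = _ := by ring

/-- Lower bound for `d_k` at `k = 2^j` by a spherical moment times a value of `ω̂`; `upper_moment` with
`a = 0` is the matching upper bound. -/
theorem dd_lower (n : ℕ) {ω : ℝ → ℝ} (hω : IsWeight ω) (hpos : ∀ r ∈ Set.Ico (0:ℝ) 1, 0 < wh ω r)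
    (i : Fin n) (j : ℕ) :
    2⁻¹ ^ (2 * n - 1) * (1/4) * (sm n i (2 ^ (j+1)) * Wd ω (j + 1)) ≤ dd n ω i (2 ^ j) := by
  have h := moment_lower hω hpos (2 * n - 1) (j + 1) (by omega)
  have hs : 0 < sm n i (2 ^ (j+1)) := by rw [pow_succ']; exact sm_pos n i _
  rw [← ENNReal.ofReal_le_ofReal_iff (dd_nonneg n hω i _), dd_lintegral n hω, ← pow_succ',
    ball_polar n i _ ω hω.2.1]
  calc _ = ENNReal.ofReal (sm n i (2 ^ (j+1))) * ENNReal.ofReal (2⁻¹ ^ (2 * n - 1) * (1/4) * Wd ω (j + 1)) := by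
        rw [← ENNReal.ofReal_mul hs.le]; congr 1; ring
    _ ≤ _ := by gcongr

theorem dd_pos (n : ℕ) {ω : ℝ → ℝ} (hω : IsWeight ω) (hpos : ∀ r ∈ Set.Ico (0:ℝ) 1, 0 < wh ω r)
    (i : Fin n) (k : ℕ) : 0 < dd n ω i k := by
  refine lt_of_lt_of_le ?_ (dd_anti n hω i (Nat.lt_two_pow_self (n := k)).le)
  refine lt_of_lt_of_le ?_ (dd_lower n hω hpos i k)
  have hs : 0 < sm n i (2 ^ (k+1)) := by rw [pow_succ']; exact sm_pos n i _
  have := Wd_pos hpos (k+1)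
  positivity

/-- The moments of the weight `ω̂^(-a) ω` on the ball. -/
theorem upper_moment (n : ℕ) {ω : ℝ → ℝ} (hω : IsWeight ω) (hD : DD ω)
    (hpos : ∀ r ∈ Set.Ico (0:ℝ) 1, 0 < wh ω r) (i : Fin n) {a : ℝ} (ha0 : 0 ≤ a) (ha : a < 1) :
    ∃ C > 0, ∀ N, 1 ≤ N → ∫⁻ w in Bl n, ENNReal.ofReal (‖w i‖ ^ (2 ^ N) * vw ω a ‖w‖) ∂(nV n)
      ≤ ENNReal.ofReal (C * sm n i (2 ^ N) * Wd ω N ^ (1 - a)) := by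
  obtain ⟨C, hC, h⟩ := moment_upper hω hD hpos ha0 ha
  refine ⟨C, hC, fun N hN => ?_⟩
  have hs : 0 < sm n i (2 ^ N) := by
    obtain ⟨N, rfl⟩ := Nat.exists_eq_add_of_le' hN
    rw [pow_succ']; exact sm_pos n i _
  rw [ball_polar n i _ _ (vw_measurable hω a)]
  calc _ ≤ ENNReal.ofReal (sm n i (2^N)) * ENNReal.ofReal (C * Wd ω N ^ (1 - a)) := by
        gcongr
        refine le_trans (setLIntegral_mono' measurableSet_Ioo fun r hr => ?_) (h N)
        apply ENNReal.ofReal_le_ofReal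
        have hv := vw_nonneg (a := a) hω hpos (show r ∈ Set.Ico (0:ℝ) 1 from ⟨hr.1.le, hr.2⟩)
        apply mul_le_of_le_one_left (mul_nonneg (pow_nonneg hr.1.le _) hv)
        exact pow_le_one₀ hr.1.le hr.2.le
    _ = _ := by rw [← ENNReal.ofReal_mul hs.le]; congr 1; ring

theorem sm_doubling_iter (n : ℕ) (i : Fin n) (N j : ℕ) (hN : 1 ≤ N) :
    sm n i (2 ^ N) ≤ (2 ^ (n - 1)) ^ j * sm n i (2 ^ (N + j)) := by
  induction j with
  | zero => simp
  | succ j ih =>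
    refine ih.trans ?_
    obtain ⟨N, rfl⟩ := Nat.exists_eq_add_of_le' hN
    have := sm_doubling n i (2 ^ (N + j))
    rw [pow_succ, mul_assoc]
    gcongr
    rw [show N + 1 + (j + 1) = (N + j + 1) + 1 by ring, show N + 1 + j = (N + j) + 1 by ring,
      pow_succ' 2 (N + j + 1), pow_succ' 2 (N + j)]
    exact this

/-- The monomial norms satisfy a doubling condition at dyadic indices. -/
theorem dd_doubling (n : ℕ) {ω : ℝ → ℝ} (hω : IsWeight ω) (hD : DD ω)
    (hpos : ∀ r ∈ Set.Ico (0:ℝ) 1, 0 < wh ω r) (i : Fin n) :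
    ∃ C > 0, ∀ j, dd n ω i (2 ^ j) ≤ C * dd n ω i (2 ^ (j + 1)) := by
  obtain ⟨C, hC, h⟩ := upper_moment n hω hD hpos i le_rfl one_pos
  obtain ⟨A, hA, hW⟩ := Wd_doubling hD.1
  set c : ℝ := 2⁻¹ ^ (2 * n - 1) * (1/4)
  have hc : 0 < c := by positivity
  refine ⟨C * 2 ^ (n-1) * A / c, by positivity, fun j => ?_⟩
  have h1 := h (j + 1) (by omega)
  have hs : ∀ j, 0 < sm n i (2 ^ (j+1)) := fun j => by rw [pow_succ']; exact sm_pos n i _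
  have hw := Wd_pos hpos
  have h2 : dd n ω i (2 ^ j) ≤ C * sm n i (2 ^ (j+1)) * Wd ω (j + 1) := by
    have := hs j
    have := hw (j+1)
    rw [← ENNReal.ofReal_le_ofReal_iff (by positivity), dd_lintegral n hω, ← pow_succ']
    simp only [sub_zero, Real.rpow_one] at h1
    refine le_trans (le_of_eq ?_) h1
    refine setLIntegral_congr_fun measurableSet_ball fun w hw => ?_
    simp only [vw_zero]
  have h3 := dd_lower n hω hpos i (j + 1)
  have h4 := sm_doubling_iter n i (j+1) 1 (by omega)
  have h5 := hW (j + 1) 1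
  rw [pow_one] at h4 h5
  calc dd n ω i (2 ^ j) ≤ C * sm n i (2 ^ (j+1)) * Wd ω (j + 1) := h2
    _ ≤ C * (2 ^ (n-1) * sm n i (2 ^ (j+1+1))) * (A * Wd ω (j + 1 + 1)) := by
        have := hs j; have := hs (j+1); have := hw (j+1)
        gcongr
    _ = C * 2 ^ (n-1) * A / c * (c * (sm n i (2 ^ (j+1+1)) * Wd ω (j + 1 + 1))) := by
        field_simp
    _ ≤ _ := by gcongr

/-- Replacing `ω` by `ω̂^(-a) ω` multiplies the dyadic moments by at most a constant times
`ω̂(1 - 2⁻ᴺ)^(-a)`. The shift `N + 3` matches the index appearing in `block_L1`. -/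
theorem block_const (n : ℕ) {ω : ℝ → ℝ} (hω : IsWeight ω) (hD : DD ω)
    (hpos : ∀ r ∈ Set.Ico (0:ℝ) 1, 0 < wh ω r) (i : Fin n) {a : ℝ} (ha0 : 0 ≤ a) (ha : a < 1) :
    ∃ C > 0, ∀ N, 1 ≤ N → ∫⁻ w in Bl n, ENNReal.ofReal (‖w i‖ ^ (2 ^ N) * vw ω a ‖w‖) ∂(nV n)
      ≤ ENNReal.ofReal (C * Wd ω N ^ (-a) * dd n ω i (2 ^ (N + 3))) := by
  obtain ⟨C, hC, h⟩ := upper_moment n hω hD hpos i ha0 ha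
  obtain ⟨A, hA, hW⟩ := Wd_doubling hD.1
  set c : ℝ := 2⁻¹ ^ (2 * n - 1) * (1/4)
  have hc : 0 < c := by positivity
  refine ⟨C * (2 ^ (n-1)) ^ 4 * A ^ 4 / c, by positivity, fun N hN => (h N hN).trans ?_⟩
  apply ENNReal.ofReal_le_ofReal
  have hs : ∀ j, 1 ≤ j → 0 < sm n i (2 ^ j) := fun j hj => by
    obtain ⟨j, rfl⟩ := Nat.exists_eq_add_of_le' hj
    rw [pow_succ']; exact sm_pos n i _
  have hw := Wd_pos hpos
  have h3 := dd_lower n hω hpos i (N + 3)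
  have h4 := sm_doubling_iter n i N 4 hN
  have h5 := hW N 4
  have hwN := hw N
  have hwa : 0 < Wd ω N ^ (-a) := Real.rpow_pos_of_pos hwN _
  calc C * sm n i (2 ^ N) * Wd ω N ^ (1 - a) = C * sm n i (2 ^ N) * (Wd ω N * Wd ω N ^ (-a)) := by
        rw [sub_eq_add_neg, Real.rpow_add hwN, Real.rpow_one]
    _ ≤ C * ((2 ^ (n-1)) ^ 4 * sm n i (2 ^ (N + 4))) * ((A ^ 4 * Wd ω (N + 4)) * Wd ω N ^ (-a)) := by
        have := hs N hN; have := hs (N+4) (by omega)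
        gcongr
    _ = C * (2 ^ (n-1)) ^ 4 * A ^ 4 / c * Wd ω N ^ (-a) * (c * (sm n i (2 ^ (N+3+1)) * Wd ω (N + 3 + 1))) := by
        field_simp
    _ ≤ _ := by gcongr

/-! ### Rotations and averaging -/

/-- Unitary maps preserve the normalized volume on the ball. -/
theorem nV_preserving {n : ℕ} (T : En n ≃ₗᵢ[ℂ] En n) :
    MeasurePreserving T ((nV n).restrict (Bl n)) ((nV n).restrict (Bl n)) := by
  let T' : En n ≃ₗᵢ[ℝ] En n :=
    { T.toLinearEquiv.restrictScalars ℝ with norm_map' := T.norm_map }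
  have h : MeasurePreserving T (volume : Measure (En n)) volume := T'.measurePreserving
  have h2 : MeasurePreserving T (nV n) (nV n) := h.smul_measure _
  have h3 := h2.restrict_preimage (measurableSet_Bl n)
  have : T ⁻¹' (Bl n) = Bl n := by
    ext w; simp [Bl]
  rwa [this] at h3

theorem measEmb {n : ℕ} (T : En n ≃ₗᵢ[ℂ] En n) : MeasurableEmbedding T :=
  T.toHomeomorph.measurableEmbedding

/-- Any unit vector `u` can be rotated so that `⟨w, u⟩` becomes the `i`-th coordinate. -/
theorem exists_isometry_coord {n : ℕ} (i : Fin n) (u : En n) (hu : ‖u‖ = 1) :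
    ∃ T : En n ≃ₗᵢ[ℂ] En n, ∀ w, T w i = inner ℂ u w := by
  have h1 : Orthonormal ℂ (({i} : Set (Fin n)).domRestrict (fun _ : Fin n => u)) := by
    constructor
    · intro _; simpa using hu
    · intro x y hxy
      exact absurd (Subsingleton.elim x y) hxy
  obtain ⟨b, hb⟩ := h1.exists_orthonormalBasis_extension_of_card_eq (by simp)
  refine ⟨b.repr, fun w => ?_⟩
  rw [OrthonormalBasis.repr_apply_apply, hb i (by simp)]

theorem lintegral_inner {n : ℕ} (i : Fin n) (u : En n) (hu : ‖u‖ = 1) (h : ℂ → ℝ → ENNReal) :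
    ∫⁻ w in Bl n, h (inner ℂ u w) ‖w‖ ∂(nV n) = ∫⁻ w in Bl n, h (w i) ‖w‖ ∂(nV n) := by
  obtain ⟨T, hT⟩ := exists_isometry_coord i u hu
  rw [← (nV_preserving T).lintegral_comp_emb (measEmb T) (fun w => h (w i) ‖w‖)]
  simp [hT]

theorem integral_inner_coord {n : ℕ} (i : Fin n) (u : En n) (hu : ‖u‖ = 1) (h : ℂ → ℝ → ℝ) :
    ∫ w in Bl n, h (inner ℂ u w) ‖w‖ ∂(nV n) = ∫ w in Bl n, h (w i) ‖w‖ ∂(nV n) := by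
  obtain ⟨T, hT⟩ := exists_isometry_coord i u hu
  rw [← (nV_preserving T).integral_comp (measEmb T) (fun w => h (w i) ‖w‖)]
  simp [hT]

/-- There is an isometry acting as multiplication by `α` on the line `ℂu` and by `φ` on its orthogonal
complement. -/
theorem exists_rot {n : ℕ} (u : En n) (hu : ‖u‖ = 1) (α φ : ℂ) (hα : ‖α‖ = 1) (hφ : ‖φ‖ = 1) :
    ∃ T : En n ≃ₗᵢ[ℂ] En n, ∀ w, T w =
      (α * inner ℂ u w) • u + φ • (w - (inner ℂ u w : ℂ) • u) := by
  let L : En n →ₗ[ℂ] En n :=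
    φ • LinearMap.id + (α - φ) • ((innerSL ℂ u).smulRight u : En n →L[ℂ] En n).toLinearMap
  have hL : ∀ w, L w = (α * inner ℂ u w) • u + φ • (w - (inner ℂ u w : ℂ) • u) := by
    intro w
    simp [L]
    module
  have horth : ∀ (w : En n), inner ℂ u (w - (inner ℂ u w : ℂ) • u) = 0 := by
    intro w
    rw [inner_sub_right, inner_smul_right, inner_self_eq_norm_sq_to_K, hu]
    simp
  have hpy : ∀ (β ψ : ℂ) (w : En n), ‖β • u + ψ • (w - (inner ℂ u w : ℂ) • u)‖ ^ 2
      = ‖β‖ ^ 2 + ‖ψ‖ ^ 2 * ‖w - (inner ℂ u w : ℂ) • u‖ ^ 2 := by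
    intro β ψ w
    have := norm_add_sq_eq_norm_sq_add_norm_sq_of_inner_eq_zero (𝕜 := ℂ) (β • u)
      (ψ • (w - (inner ℂ u w : ℂ) • u)) (by
        rw [inner_smul_left, inner_smul_right, horth]; simp)
    rw [sq, this, norm_smul, norm_smul, hu]; ring
  have hnorm : ∀ w, ‖L w‖ = ‖w‖ := by
    intro w
    have h1 := hpy (α * inner ℂ u w) φ w
    have h2 := hpy (inner ℂ u w) 1 w
    rw [← hL, norm_mul, hα, hφ] at h1
    simp only [one_smul, add_sub_cancel, norm_one] at h2
    rw [← sq_eq_sq₀ (norm_nonneg _) (norm_nonneg _), h1, h2, one_mul]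
  let Li : En n →ₗᵢ[ℂ] En n := ⟨L, hnorm⟩
  exact ⟨Li.toLinearIsometryEquiv rfl, fun w => hL w⟩

open Real in
/-- Integrals against a radial weight are unchanged when the integrand is averaged over a family of
rotations. -/
theorem averaging {n : ℕ} {ω : ℝ → ℝ} (hω : IsWeight ω) (T : ℝ → (En n ≃ₗᵢ[ℂ] En n))
    (hT : Continuous fun p : ℝ × En n => T p.1 p.2) (H : En n → ℂ) (hH : ContinuousOn H (Bl n))
    (hint : IntegrableOn (fun w => H w * (ω ‖w‖ : ℂ)) (Bl n) (nV n)) :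
    IntegrableOn (fun w => (∫ θ in (-π)..π, H (T θ w)) * (ω ‖w‖ : ℂ)) (Bl n) (nV n) ∧
    ∫ w in Bl n, (∫ θ in (-π)..π, H (T θ w)) * (ω ‖w‖ : ℂ) ∂(nV n) =
      2 * π * ∫ w in Bl n, H w * (ω ‖w‖ : ℂ) ∂(nV n) := by
  set μ := (nV n).restrict (Bl n) with hμ
  set ν := (volume : Measure ℝ).restrict (Set.Ioc (-π) π) with hν
  have hmaps : Set.MapsTo (fun p : ℝ × En n => T p.1 p.2) (Set.univ ×ˢ Bl n) (Bl n) := by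
    rintro ⟨θ, w⟩ ⟨_, hw⟩
    simpa [Bl] using hw
  have hmeas : AEStronglyMeasurable (fun p : ℝ × En n => H (T p.1 p.2) * (ω ‖p.2‖ : ℂ)) (ν.prod μ) := by
    apply AEStronglyMeasurable.mul
    · have : ν.prod μ = ((volume : Measure ℝ).prod (nV n)).restrict (Set.Ioc (-π) π ×ˢ Bl n) :=
        Measure.prod_restrict _ _
      rw [this]
      refine ContinuousOn.aestronglyMeasurable ?_ (measurableSet_Ioc.prod (measurableSet_Bl n))
      exact (hH.comp hT.continuousOn hmaps).mono (Set.prod_mono (Set.subset_univ _) subset_rfl)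
    · exact (Complex.measurable_ofReal.comp
        (hω.2.1.comp (measurable_norm.comp measurable_snd))).aestronglyMeasurable
  have heach : ∀ θ, Integrable (fun w => H (T θ w) * (ω ‖w‖ : ℂ)) μ := by
    intro θ
    have := (nV_preserving (T θ)).integrable_comp_emb (measEmb _) |>.2 hint
    simpa [Function.comp_def] using this
  have heachn : ∀ θ, ∫ w, ‖H (T θ w) * (ω ‖w‖ : ℂ)‖ ∂μ = ∫ w, ‖H w * (ω ‖w‖ : ℂ)‖ ∂μ := by
    intro θ
    have := (nV_preserving (T θ)).integral_comp (measEmb _) (fun w => ‖H w * (ω ‖w‖ : ℂ)‖)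
    simpa using this
  have heachi : ∀ θ, ∫ w, H (T θ w) * (ω ‖w‖ : ℂ) ∂μ = ∫ w, H w * (ω ‖w‖ : ℂ) ∂μ := by
    intro θ
    have := (nV_preserving (T θ)).integral_comp (measEmb _) (fun w => H w * (ω ‖w‖ : ℂ))
    simpa using this
  have hprod : Integrable (fun p : ℝ × En n => H (T p.1 p.2) * (ω ‖p.2‖ : ℂ)) (ν.prod μ) := by
    rw [integrable_prod_iff hmeas]
    refine ⟨Eventually.of_forall heach, ?_⟩
    simp only [heachn]
    exact integrable_const _
  have hpi : -π ≤ π := by linarith [pi_pos]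
  have hrw : ∀ w, (∫ θ in (-π)..π, H (T θ w)) * (ω ‖w‖ : ℂ) = ∫ θ, H (T θ w) * (ω ‖w‖ : ℂ) ∂ν := by
    intro w
    rw [intervalIntegral.integral_of_le hpi, integral_mul_const]
  simp only [hrw]
  refine ⟨hprod.integral_prod_right, ?_⟩
  rw [← integral_integral_swap (f := fun θ w => H (T θ w) * (ω ‖w‖ : ℂ)) hprod]
  simp only [heachi]
  rw [integral_const]
  simp [hν, Real.volume_real_Ioc_of_le hpi]
  left; ring

open Real in
/-- The `k`-th Fourier coefficient of a power series on a circle is its `k`-th term. -/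
theorem circle_coeff {R : ℝ} {g : ℂ → ℂ} {a : ℕ → ℂ}
    (hg : ∀ z ∈ ball (0:ℂ) R, HasSum (fun j => a j * z ^ j) (g z)) {z : ℂ} (hz : ‖z‖ < R) (k : ℕ) :
    ∫ θ in (-π)..π, g (Complex.exp (θ * Complex.I) * z) * Complex.exp (-(k * (θ * Complex.I))) =
      2 * π * (a k * z ^ k) := by
  have hn : ∀ θ : ℝ, ‖Complex.exp (θ * Complex.I)‖ = 1 := Complex.norm_exp_ofReal_mul_I
  have hsum : Summable fun j => ‖a j * z ^ j‖ := (hg z (by simpa using hz)).summable.norm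
  have h := intervalIntegral.hasSum_integral_of_dominated_convergence (μ := volume)
    (a := -π) (b := π)
    (F := fun j (θ : ℝ) => a j * (Complex.exp (θ * Complex.I) * z) ^ j *
      Complex.exp (-(k * (θ * Complex.I))))
    (f := fun θ : ℝ => g (Complex.exp (θ * Complex.I) * z) * Complex.exp (-(k * (θ * Complex.I))))
    (fun j _ => ‖a j * z ^ j‖)
    (fun j => (Continuous.aestronglyMeasurable (by fun_prop)))
    (fun j => Eventually.of_forall fun θ _ => by
      have h2 : ‖Complex.exp (-(k * (θ * Complex.I)))‖ = 1 := by
        rw [Complex.norm_exp]; simp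
      rw [norm_mul, h2, norm_mul, norm_pow, norm_mul, hn, one_mul, mul_one, norm_mul, norm_pow])
    (Eventually.of_forall fun θ _ => hsum)
    (by simp)
    (Eventually.of_forall fun θ _ => (hg _ (by simpa [hn] using hz)).mul_right _)
  refine h.unique ?_
  have h3 : ∀ j, ∫ θ in (-π)..π, a j * (Complex.exp (θ * Complex.I) * z) ^ j *
      Complex.exp (-(k * (θ * Complex.I))) = if j = k then 2 * π * (a k * z ^ k) else 0 := by
    intro j
    have h4 : ∀ θ : ℝ, a j * (Complex.exp (θ * Complex.I) * z) ^ j * Complex.exp (-(k * (θ * Complex.I)))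
        = (a j * z ^ j) * Complex.exp (((j:ℤ) - (k:ℤ) : ℤ) * Complex.I * θ) := by
      intro θ
      rw [mul_pow, ← Complex.exp_nat_mul]
      rw [show (((j:ℤ) - (k:ℤ) : ℤ) : ℂ) * Complex.I * θ = j * (θ * Complex.I) + -(k * (θ * Complex.I)) by
        push_cast; ring, Complex.exp_add]
      ring
    simp only [h4]
    rw [intervalIntegral.integral_const_mul, integral_exp_int]
    by_cases hjk : j = k
    · subst hjk; simp; ring
    · simp [hjk, sub_eq_zero]
  simp only [h3]
  exact hasSum_ite_eq k _

/-! ### The power series of the kernel -/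

theorem exists_unit_dir {n : ℕ} (i : Fin n) (z : En n) :
    ∃ u : En n, ‖u‖ = 1 ∧ z = (‖z‖ : ℂ) • u := by
  by_cases h0 : z = 0
  · exact ⟨EuclideanSpace.single i 1, by simp, by simp [h0]⟩
  · have : ‖z‖ ≠ 0 := norm_ne_zero_iff.2 h0
    refine ⟨(‖z‖⁻¹ : ℂ) • z, by simp [norm_smul, this], ?_⟩
    rw [smul_smul, mul_inv_cancel₀ (by exact_mod_cast this), one_smul]

theorem inner_norm_le {n : ℕ} {u w : En n} (hu : ‖u‖ = 1) : ‖(inner ℂ u w : ℂ)‖ ≤ ‖w‖ := by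
  simpa [hu] using norm_inner_le_norm (𝕜 := ℂ) u w

/-- `A²_ω ⊆ A¹_ω`, since the total mass of `ω` is finite. -/
theorem l1_of_l2 {n : ℕ} (hn : 1 ≤ n) {ω : ℝ → ℝ} (hω : IsWeight ω) {f : En n → ℂ}
    (hf : InAp n 2 ω f) : IntegrableOn (fun w => f w * (ω ‖w‖ : ℂ)) (Bl n) (nV n) := by
  have h2 := hf.2
  have h0 := weight_integrable n hn hω
  refine Integrable.mono (Integrable.add h0 h2) ?_ ?_
  · exact (hf.1.continuousOn.aestronglyMeasurable (measurableSet_Bl n)).mul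
      (Complex.measurable_ofReal.comp (hω.2.1.comp measurable_norm)).aestronglyMeasurable
  · filter_upwards [ae_restrict_mem (measurableSet_Bl n)] with w hw
    have hw0 := hω.1 _ (norm_mem_Ico hw)
    simp only [Pi.add_apply, Real.rpow_ofNat]
    rw [norm_mul, Complex.norm_real, Real.norm_of_nonneg hw0,
      Real.norm_of_nonneg (by positivity)]
    nlinarith [mul_nonneg (sq_nonneg (‖f w‖ - 1)) hw0, mul_nonneg (sq_nonneg (‖f w‖)) hw0]

theorem taylor_ball {R : ℝ} {g : ℂ → ℂ} (hg : DifferentiableOn ℂ g (ball 0 R)) :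
    ∃ a : ℕ → ℂ, ∀ z ∈ ball (0:ℂ) R, HasSum (fun j => a j * z ^ j) (g z) := by
  refine ⟨fun j => (j.factorial : ℂ)⁻¹ * iteratedDeriv j g 0, fun z hz => ?_⟩
  have := Complex.hasSum_taylorSeries_on_ball hg hz
  refine this.congr_fun fun j => ?_
  simp only [smul_eq_mul, sub_zero]; ring

/-- Pythagoras for the decomposition of `w` along `u` and its orthogonal complement. -/
theorem orth_pyth {n : ℕ} {u : En n} (hu : ‖u‖ = 1) (w : En n) (φ : ℂ) :
    ‖(inner ℂ u w : ℂ) • u + φ • (w - (inner ℂ u w : ℂ) • u)‖ ^ 2 =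
      ‖(inner ℂ u w : ℂ)‖ ^ 2 + ‖φ‖ ^ 2 * ‖w - (inner ℂ u w : ℂ) • u‖ ^ 2 := by
  have horth : inner ℂ u (w - (inner ℂ u w : ℂ) • u) = 0 := by
    rw [inner_sub_right, inner_smul_right, inner_self_eq_norm_sq_to_K, hu]
    simp
  have := norm_add_sq_eq_norm_sq_add_norm_sq_of_inner_eq_zero (𝕜 := ℂ) ((inner ℂ u w : ℂ) • u)
      (φ • (w - (inner ℂ u w : ℂ) • u)) (by
        rw [inner_smul_left, inner_smul_right, horth]; simp)
  rw [sq, this, norm_smul, norm_smul, hu]; ring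

open Real in
/-- The mean value property over rotations of the complement of `ℂu`: the average of a holomorphic `f`
at `⟨w, u⟩ u + e^{iθ} (w - ⟨w, u⟩ u)` is the value of `f` at the projection of `w` to `ℂu`. -/
theorem mean_value_orth {n : ℕ} {f : En n → ℂ} (hf : DifferentiableOn ℂ f (Bl n)) {u : En n}
    (hu : ‖u‖ = 1) {w : En n} (hw : w ∈ Bl n) :
    ∫ θ in (-π)..π, f ((inner ℂ u w : ℂ) • u +
      Complex.exp (θ * Complex.I) • (w - (inner ℂ u w : ℂ) • u)) =
      2 * π * f ((inner ℂ u w : ℂ) • u) := by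
  set l : ℂ := inner ℂ u w with hl
  set w' := w - l • u with hw'
  have hpy := orth_pyth hu w
  have h1 : ‖l‖ ^ 2 + ‖w'‖ ^ 2 < 1 := by
    have := hpy 1
    simp only [one_smul, add_sub_cancel, norm_one, one_pow, one_mul] at this
    rw [← this]
    have := norm_mem_Ico hw
    nlinarith [this.1, this.2]
  obtain ⟨R, hR1, hR⟩ : ∃ R : ℝ, 1 < R ∧ ‖l‖ ^ 2 + R ^ 2 * ‖w'‖ ^ 2 < 1 := by
    have hc : Tendsto (fun R : ℝ => ‖l‖ ^ 2 + R ^ 2 * ‖w'‖ ^ 2) (nhdsWithin 1 (Set.Ioi 1))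
        (nhds (‖l‖ ^ 2 + 1 ^ 2 * ‖w'‖ ^ 2)) :=
      (Continuous.tendsto (by fun_prop) 1).mono_left nhdsWithin_le_nhds
    have h2 := hc.eventually (gt_mem_nhds (show ‖l‖ ^ 2 + 1 ^ 2 * ‖w'‖ ^ 2 < 1 by simpa using h1))
    obtain ⟨R, hR, hR'⟩ := (h2.and self_mem_nhdsWithin).exists
    exact ⟨R, hR', hR⟩
  have hg : DifferentiableOn ℂ (fun z : ℂ => f (l • u + z • w')) (ball 0 R) := by
    refine hf.comp (by fun_prop) ?_
    intro z hz
    have hz' : ‖z‖ < R := by simpa using hz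
    have h3 : ‖l • u + z • w'‖ ^ 2 < 1 := by
      rw [hpy z]
      refine lt_of_le_of_lt ?_ hR
      gcongr
    have : ‖l • u + z • w'‖ < 1 := by
      by_contra h; push Not at h
      nlinarith
    simpa [Bl] using this
  obtain ⟨a, ha⟩ := taylor_ball hg
  have h4 := circle_coeff ha (z := 1) (by simpa using hR1) 0
  have h5 : a 0 = f (l • u) := by
    have h6 := ha 0 (by simp; linarith)
    have h7 : HasSum (fun j => a j * (0:ℂ) ^ j) (a 0) := by
      convert hasSum_ite_eq 0 (a 0) using 2 with j
      by_cases hj : j = 0 <;> simp [hj]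
    have := h6.unique h7
    simpa using this.symm
  simpa [h5] using h4

open Real in
/-- Pairing `f ∈ A²_ω` with `⟨w, u⟩^k` picks out the `k`-th Taylor coefficient of the slice function
`l ↦ f(l u)`, multiplied by `d_k`. -/
theorem coeff_integral {n : ℕ} (i : Fin n) {ω : ℝ → ℝ} (hω : IsWeight ω) {f : En n → ℂ}
    (hf : InAp n 2 ω f) {u : En n} (hu : ‖u‖ = 1) {a : ℕ → ℂ}
    (ha : ∀ z ∈ ball (0:ℂ) 1, HasSum (fun j => a j * z ^ j) (f (z • u))) (k : ℕ) :
    ∫ w in Bl n, f w * (starRingEnd ℂ) (inner ℂ u w) ^ k * (ω ‖w‖ : ℂ) ∂(nV n) =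
      a k * dd n ω i k := by
  have hpi : (2 * π : ℂ) ≠ 0 := by simp [pi_ne_zero]
  have hnθ : ∀ θ : ℝ, ‖Complex.exp (θ * Complex.I)‖ = 1 := Complex.norm_exp_ofReal_mul_I
  have hin : ∀ w ∈ Bl n, ‖(inner ℂ u w : ℂ)‖ < 1 := fun w hw =>
    (inner_norm_le hu).trans_lt (norm_mem_Ico hw).2
  -- The two rotation families: on the orthogonal complement of `u`, and on the line `ℂu`.
  choose T hT using fun θ : ℝ => exists_rot u hu 1 (Complex.exp (θ * Complex.I)) (by simp) (hnθ θ)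
  choose S hS using fun θ : ℝ => exists_rot u hu (Complex.exp (θ * Complex.I)) 1 (hnθ θ) (by simp)
  have hTc : Continuous fun p : ℝ × En n => T p.1 p.2 := by simp only [hT]; fun_prop
  have hSc : Continuous fun p : ℝ × En n => S p.1 p.2 := by simp only [hS]; fun_prop
  have hrot : ∀ (α φ : ℂ) (w : En n), inner ℂ u ((α * inner ℂ u w) • u + φ • (w - (inner ℂ u w : ℂ) • u))
      = α * inner ℂ u w := by
    intro α φ w
    simp only [inner_add_right, inner_smul_right, inner_sub_right, inner_self_eq_norm_sq_to_K, hu]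
    simp
  have hTi : ∀ θ w, inner ℂ u (T θ w) = (inner ℂ u w : ℂ) := by
    intro θ w; rw [hT, hrot, one_mul]
  have hSi : ∀ θ w, inner ℂ u (S θ w) = Complex.exp (θ * Complex.I) * (inner ℂ u w : ℂ) := by
    intro θ w; rw [hS, hrot]
  have hfc := hf.1.continuousOn
  have hH1c : ContinuousOn (fun w => f w * (starRingEnd ℂ) (inner ℂ u w) ^ k) (Bl n) :=
    hfc.mul (Continuous.continuousOn (by fun_prop))
  have hH2c : ContinuousOn (fun w => f ((inner ℂ u w : ℂ) • u) * (starRingEnd ℂ) (inner ℂ u w) ^ k) (Bl n) := by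
    refine ContinuousOn.mul (hfc.comp (Continuous.continuousOn (by fun_prop)) ?_)
      (Continuous.continuousOn (by fun_prop))
    intro w hw
    have := hin w hw
    simpa [Bl, norm_smul, hu] using this
  have hH1i : IntegrableOn (fun w => f w * (starRingEnd ℂ) (inner ℂ u w) ^ k * (ω ‖w‖ : ℂ)) (Bl n) (nV n) := by
    refine Integrable.mono (l1_of_l2 i.pos hω hf) ?_ ?_
    · exact (hH1c.aestronglyMeasurable (measurableSet_Bl n)).mul
        (Complex.measurable_ofReal.comp (hω.2.1.comp measurable_norm)).aestronglyMeasurable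
    · filter_upwards [ae_restrict_mem (measurableSet_Bl n)] with w hw
      simp only [norm_mul, norm_pow, RCLike.norm_conj]
      have h1 : ‖(inner ℂ u w : ℂ)‖ ^ k ≤ 1 := pow_le_one₀ (norm_nonneg _) (hin w hw).le
      gcongr
      exact mul_le_of_le_one_right (norm_nonneg _) h1
  obtain ⟨hA1, hA2⟩ := averaging hω T hTc _ hH1c hH1i
  have hav1 : ∀ w ∈ Bl n, (∫ θ in (-π)..π, f (T θ w) * (starRingEnd ℂ) (inner ℂ u (T θ w)) ^ k) * (ω ‖w‖ : ℂ)
      = 2 * π * (f ((inner ℂ u w : ℂ) • u) * (starRingEnd ℂ) (inner ℂ u w) ^ k * (ω ‖w‖ : ℂ)) := by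
    intro w hw
    simp only [hTi]
    rw [intervalIntegral.integral_mul_const]
    have := mean_value_orth hf.1 hu hw
    simp only [hT, one_mul]
    rw [this]; ring
  rw [setIntegral_congr_fun (measurableSet_Bl n) hav1, integral_const_mul] at hA2
  have hA3 := mul_left_cancel₀ hpi hA2
  have hH2i : IntegrableOn (fun w => f ((inner ℂ u w : ℂ) • u) * (starRingEnd ℂ) (inner ℂ u w) ^ k * (ω ‖w‖ : ℂ))
      (Bl n) (nV n) := by
    have h1 := (integrableOn_congr_fun hav1 (measurableSet_Bl n)).1 hA1
    have h2 := Integrable.const_mul h1 (2 * π : ℂ)⁻¹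
    refine h2.congr (Eventually.of_forall fun w => ?_)
    simp only []
    rw [inv_mul_cancel_left₀ hpi]
  obtain ⟨-, hB2⟩ := averaging hω S hSc _ hH2c hH2i
  have hav2 : ∀ w ∈ Bl n, (∫ θ in (-π)..π, f ((inner ℂ u (S θ w) : ℂ) • u) *
        (starRingEnd ℂ) (inner ℂ u (S θ w)) ^ k) * (ω ‖w‖ : ℂ)
      = 2 * π * (a k * ((‖(inner ℂ u w : ℂ)‖ ^ (2 * k) * ω ‖w‖ : ℝ) : ℂ)) := by
    intro w hw
    have h1 := circle_coeff ha (hin w hw) k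
    have h2 : ∀ θ : ℝ, f ((inner ℂ u (S θ w) : ℂ) • u) * (starRingEnd ℂ) (inner ℂ u (S θ w)) ^ k =
        f ((Complex.exp (θ * Complex.I) * inner ℂ u w) • u) * Complex.exp (-(k * (θ * Complex.I))) *
          (starRingEnd ℂ) (inner ℂ u w) ^ k := by
      intro θ
      rw [hSi, map_mul, mul_pow, ← Complex.exp_conj, ← Complex.exp_nat_mul]
      simp only [map_mul, Complex.conj_ofReal, Complex.conj_I, mul_neg]
      ring
    simp only [h2]
    rw [intervalIntegral.integral_mul_const, h1]
    have h3 : (inner ℂ u w : ℂ) ^ k * (starRingEnd ℂ) (inner ℂ u w) ^ k = ((‖(inner ℂ u w : ℂ)‖ ^ (2 * k) : ℝ) : ℂ) := by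
      rw [← mul_pow, Complex.mul_conj, Complex.normSq_eq_norm_sq, pow_mul]; push_cast; rfl
    push_cast at h3 ⊢
    linear_combination (2 * π * a k * (ω ‖w‖ : ℂ)) * h3
  rw [setIntegral_congr_fun (measurableSet_Bl n) hav2, integral_const_mul] at hB2
  have hB3 := mul_left_cancel₀ hpi hB2
  rw [← hA3, ← hB3, integral_const_mul, integral_complex_ofReal, dd]
  congr 2
  exact integral_inner_coord i u hu (fun z r => ‖z‖ ^ (2 * k) * ω r)

/-- The power series of the reproducing kernel, with `⟨z, ξ⟩^k / d_k` as its `k`-th term. The Taylor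
coefficients of `B_ξ` on the slice through `z` are found by testing the reproducing property on the
powers `⟨w, u⟩^k`. -/
theorem kernel_formula {n : ℕ} (i : Fin n) {ω : ℝ → ℝ} (hω : IsWeight ω)
    (hpos : ∀ r ∈ Set.Ico (0:ℝ) 1, 0 < wh ω r) {B : En n → En n → ℂ} (hB : IsRepKernel n ω B)
    {ξ z : En n} (hξ : ξ ∈ Bl n) (hz : z ∈ Bl n) :
    HasSum (fun k => (inner ℂ ξ z : ℂ) ^ k / (dd n ω i k : ℂ)) (B ξ z) := by
  obtain ⟨u, hu, hzu⟩ := exists_unit_dir i z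
  have hf := hB.1 ξ hξ
  have hg : DifferentiableOn ℂ (fun l : ℂ => B ξ (l • u)) (ball 0 1) := by
    refine hf.1.comp (by fun_prop) ?_
    intro l hl
    simpa [Bl, norm_smul, hu] using hl
  obtain ⟨a, ha⟩ := taylor_ball hg
  have hak : ∀ k, a k = (inner ℂ ξ u : ℂ) ^ k / (dd n ω i k : ℂ) := by
    intro k
    have hmem : InAp n 2 ω (fun w => (inner ℂ u w : ℂ) ^ k) := by
      refine ⟨Differentiable.differentiableOn (((innerSL ℂ u).differentiable).pow k), ?_⟩
      refine Integrable.mono (weight_integrable n i.pos hω) ?_ ?_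
      · refine Measurable.aestronglyMeasurable (Measurable.mul ?_ (hω.2.1.comp measurable_norm))
        simp only [Real.rpow_ofNat]
        exact Continuous.measurable (by fun_prop)
      · filter_upwards [ae_restrict_mem (measurableSet_Bl n)] with w hw
        have h1 : ‖(inner ℂ u w : ℂ)‖ ≤ 1 := (inner_norm_le hu).trans (norm_mem_Ico hw).2.le
        rw [norm_mul]
        apply mul_le_of_le_one_left (norm_nonneg _)
        simp only [Real.rpow_ofNat, norm_pow, norm_norm]
        exact pow_le_one₀ (by positivity) (pow_le_one₀ (norm_nonneg _) h1)
    have h1 := hB.2 _ hmem ξ hξ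
    have h2 := coeff_integral i hω hf hu ha k
    have h3 := congrArg (starRingEnd ℂ) h1
    rw [← integral_conj] at h3
    simp only [map_mul, map_pow, Complex.conj_conj, Complex.conj_ofReal, inner_conj_symm] at h3
    have hd : (dd n ω i k : ℂ) ≠ 0 := by exact_mod_cast (dd_pos n hω hpos i k).ne'
    rw [eq_div_iff hd, ← h2, h3]
    refine integral_congr_ae (Eventually.of_forall fun w => ?_)
    simp only [inner_conj_symm]
    ring
  have h4 := ha (‖z‖ : ℂ) (by simpa [Bl] using hz)
  simp only [← hzu, hak] at h4
  convert h4 using 2 with k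
  conv_lhs => rw [hzu, inner_smul_right]
  rw [mul_pow]; ring

/-! ### Smooth dyadic blocks -/

/-- The trapezoidal cutoff, equal to `1` for `k ≤ 2^J` and to `0` for `k ≥ 2^(J+1)`. -/
def cut (J k : ℕ) : ℝ := max 0 (min 1 (2 - k / 2 ^ J))

/-- The difference of two consecutive cutoffs, supported in `2^J < k < 2^(J+2)`. -/
def bump (J k : ℕ) : ℝ := cut (J + 1) k - cut J k

theorem cut_nonneg (J k : ℕ) : 0 ≤ cut J k := le_max_left _ _

theorem cut_le_one (J k : ℕ) : cut J k ≤ 1 := max_le zero_le_one (min_le_left _ _)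

theorem cut_one {J k : ℕ} (h : k ≤ 2 ^ J) : cut J k = 1 := by
  have h2 : (k : ℝ) / 2 ^ J ≤ 1 := by
    rw [div_le_one (by positivity)]; exact_mod_cast h
  rw [cut, min_eq_left (by linarith), max_eq_right zero_le_one]

theorem cut_zero {J k : ℕ} (h : 2 ^ (J + 1) ≤ k) : cut J k = 0 := by
  have h2 : 2 ≤ (k : ℝ) / 2 ^ J := by
    rw [le_div_iff₀ (by positivity)]
    rw [pow_succ'] at h
    exact_mod_cast h
  rw [cut, max_eq_left]
  exact (min_le_right _ _).trans (by linarith)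

theorem cut_lip (J k : ℕ) : |cut J (k + 1) - cut J k| ≤ 1 / 2 ^ J := by
  unfold cut
  refine (abs_max_sub_max_le_max _ _ _ _).trans ?_
  rw [sub_self, abs_zero, max_eq_right (abs_nonneg _)]
  refine (abs_min_sub_min_le_max _ _ _ _).trans ?_
  rw [sub_self, abs_zero, max_eq_right (abs_nonneg _)]
  have : (2 - ((k + 1 : ℕ) : ℝ) / 2 ^ J) - (2 - (k : ℝ) / 2 ^ J) = - (1 / 2 ^ J) := by
    push_cast; ring
  rw [this, abs_neg, abs_of_nonneg (by positivity)]

theorem bump_abs_le (J k : ℕ) : |bump J k| ≤ 1 := by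
  have := cut_nonneg J k; have := cut_nonneg (J+1) k
  have := cut_le_one J k; have := cut_le_one (J+1) k
  rw [bump, abs_le]; constructor <;> linarith

theorem bump_lip (J k : ℕ) : |bump J (k + 1) - bump J k| ≤ 2 / 2 ^ J := by
  have h1 := cut_lip J k
  have h2 := cut_lip (J + 1) k
  have h3 : (1:ℝ) / 2 ^ (J + 1) ≤ 1 / 2 ^ J := by
    apply one_div_le_one_div_of_le (by positivity)
    exact pow_le_pow_right₀ (by norm_num) (by omega)
  have : bump J (k + 1) - bump J k = (cut (J+1) (k+1) - cut (J+1) k) - (cut J (k+1) - cut J k) := by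
    unfold bump; ring
  rw [this]
  refine (abs_sub _ _).trans ?_
  have : (2:ℝ) / 2 ^ J = 1 / 2 ^ J + 1 / 2 ^ J := by ring
  linarith

theorem bump_low {J k : ℕ} (h : k ≤ 2 ^ J) : bump J k = 0 := by
  rw [bump, cut_one h, cut_one (h.trans (Nat.pow_le_pow_right (by norm_num) (by omega))), sub_self]

theorem bump_high {J k : ℕ} (h : 2 ^ (J + 2) ≤ k) : bump J k = 0 := by
  rw [bump, cut_zero h, cut_zero (le_trans (Nat.pow_le_pow_right (by norm_num) (by omega)) h), sub_self]

/-- The smoothly truncated kernel series. -/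
def FJ (d : ℕ → ℝ) (J : ℕ) (l : ℂ) : ℂ := ∑ k ∈ Finset.range (2 ^ (J + 1)), (cut J k : ℂ) * (l ^ k / d k)

/-- The `J`-th smooth dyadic block of the kernel series. -/
def fJ (d : ℕ → ℝ) (J : ℕ) (l : ℂ) : ℂ := ∑ k ∈ Finset.range (2 ^ (J + 2)), (bump J k : ℂ) * (l ^ k / d k)

/-- Telescoping: consecutive truncations differ by one dyadic block. -/
theorem FJ_succ (d : ℕ → ℝ) (J : ℕ) (l : ℂ) : FJ d (J + 1) l = FJ d J l + fJ d J l := by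
  have h : FJ d J l = ∑ k ∈ Finset.range (2 ^ (J + 2)), (cut J k : ℂ) * (l ^ k / d k) := by
    refine Finset.sum_subset (Finset.range_mono (Nat.pow_le_pow_right (by norm_num) (by omega))) ?_
    intro k _ hk
    rw [cut_zero (by simpa using hk)]; simp
  rw [h, FJ, fJ, ← Finset.sum_add_distrib]
  refine Finset.sum_congr rfl fun k _ => ?_
  rw [bump]; push_cast; ring

theorem FJ_eq (d : ℕ → ℝ) (J M : ℕ) (l : ℂ) :
    FJ d (J + M) l = FJ d J l + ∑ s ∈ Finset.range M, fJ d (J + s) l := by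
  induction M with
  | zero => simp
  | succ M ih => rw [← add_assoc, FJ_succ, ih, Finset.sum_range_succ, add_assoc]

/-- The truncations are sums of the series up to `2^J` plus a tail bounded by absolute convergence, so
they converge to the sum. -/
theorem FJ_tendsto (d : ℕ → ℝ) {l K : ℂ} (h : HasSum (fun k => l ^ k / (d k : ℂ)) K) :
    Tendsto (fun J => FJ d J l) atTop (nhds K) := by
  rw [← h.tsum_eq]
  have e : ∀ J, FJ d J l = ∑' k, (cut J k : ℂ) * (l ^ k / d k) := by
    intro J
    rw [tsum_eq_sum (s := Finset.range (2 ^ (J + 1)))]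
    · rfl
    · intro k hk
      rw [cut_zero (by simpa using hk)]; simp
  simp only [e]
  refine tendsto_tsum_of_dominated_convergence (bound := fun k => ‖l ^ k / (d k : ℂ)‖) h.summable.norm ?_ ?_
  · intro k
    refine tendsto_const_nhds.congr' ?_
    filter_upwards [eventually_ge_atTop k] with J hJ
    rw [cut_one ((Nat.lt_two_pow_self (n := k)).le.trans (Nat.pow_le_pow_right (by norm_num) hJ))]
    simp
  · refine Eventually.of_forall fun J k => ?_
    rw [norm_mul, Complex.norm_real, Real.norm_of_nonneg (cut_nonneg _ _)]
    exact mul_le_of_le_one_left (norm_nonneg _) (cut_le_one _ _)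

theorem kernel_enorm_le (d : ℕ → ℝ) {l K : ℂ} (h : HasSum (fun k => l ^ k / (d k : ℂ)) K) (J : ℕ) :
    ‖K‖ₑ ≤ ‖FJ d J l‖ₑ + ∑' s, ‖fJ d (J + s) l‖ₑ := by
  have h1 := (FJ_tendsto d h).enorm
  have h2 := (tendsto_add_atTop_iff_nat J).2 h1
  refine le_of_tendsto h2 (Eventually.of_forall fun M => ?_)
  rw [add_comm M J, FJ_eq]
  refine (enorm_add_le _ _).trans ?_
  gcongr
  refine (enorm_sum_le _ _).trans ?_
  exact ENNReal.sum_le_tsum _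

open Real in
/-- The `L¹` norm over the circle of radius `t` of a dyadic block of `∑ l^k / d_k`. The hypotheses on `d`
make the coefficients `1 / d_k` vary slowly, so that `trig_L1` applies once the factor `t^(2^j)` has
been taken out. -/
theorem block_L1_real {d : ℕ → ℝ} (hd : ∀ k, 0 < d k) (hanti : ∀ k l, k ≤ l → d l ≤ d k) {C : ℝ} (hC : 0 < C)
    (hdoub : ∀ j, d (2 ^ j) ≤ C * d (2 ^ (j + 1)))
    (hdiff : ∀ l j : ℕ, d (l + j) - d (l + j + 1) ≤ d l / (j + 1)) (j : ℕ) {t : ℝ} (ht0 : 0 ≤ t) (ht1 : t < 1) :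
    ∫ θ in (-π)..π, ‖fJ d (j + 1) (t * Complex.exp (θ * Complex.I))‖ ≤
      100 * (4 + 2 * C ^ 3) * (t ^ (2 ^ j) / d (2 ^ (j + 3))) := by
  set h := 2 ^ j with hh
  have hhpos : 0 < h := by positivity
  set d4 := d (2 ^ (j + 3)) with hd4
  have hd4pos : 0 < d4 := hd _
  have hm : 2 ^ (j + 1) = 2 * h := by rw [pow_succ']
  have h4m : 2 ^ (j + 3) = 8 * h := by rw [pow_add]; omega
  have hdh : d h ≤ C ^ 3 * d4 := by
    calc d h ≤ C * (C * (C * d (2 ^ (j + 1 + 1 + 1)))) := by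
          refine (hdoub j).trans ?_
          gcongr
          refine (hdoub _).trans ?_
          gcongr
          exact hdoub _
      _ = _ := by ring
  have hdk : ∀ k, k ≤ 2 ^ (j + 3) → 1 / d k ≤ 1 / d4 := fun k hk =>
    one_div_le_one_div_of_le hd4pos (hanti _ _ hk)
  -- On the support `k > 2h` of the bump, `t^k = t^h t^(k-h)` and `k - h > h`, so that the powers
  -- `t^(k-h)` vary by at most `1 / h`; the truncated subtraction is harmless since `bump` vanishes otherwise.
  set β : ℕ → ℂ := fun k => ((bump (j + 1) k * (t ^ (k - h) * (1 / d k)) : ℝ) : ℂ) with hβ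
  have hD : 0 < (4 + 2 * C ^ 3) / d4 := by positivity
  have key := trig_L1 (2 ^ (j + 1)) (2 ^ (j + 3)) (by positivity) (by rw [pow_add, pow_add]; omega)
    ((4 + 2 * C ^ 3) / d4) hD β (by simp [hβ, bump_low]) (by simp [hβ, bump_high (J := j + 1) le_rfl])
    (by
      intro k
      rw [hβ, Complex.norm_real, Real.norm_eq_abs]
      by_cases hk : k ≤ 2 ^ (j + 3)
      · rw [abs_mul]
        have h1 := bump_abs_le (j + 1) k
        have h2 : |t ^ (k - h) * (1 / d k)| ≤ 1 / d4 := by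
          rw [abs_of_nonneg (by have := hd k; positivity)]
          calc t ^ (k - h) * (1 / d k) ≤ 1 * (1 / d4) := by
                have := hd k
                gcongr
                · exact pow_le_one₀ ht0 ht1.le
                · exact hanti _ _ hk
            _ = _ := one_mul _
        calc |bump (j + 1) k| * |t ^ (k - h) * (1 / d k)| ≤ 1 * (1 / d4) := by gcongr
          _ ≤ (4 + 2 * C ^ 3) / d4 := by
            rw [one_mul]; gcongr; nlinarith [pow_pos hC 3]
      · rw [bump_high (by rw [show j + 1 + 2 = j + 3 by ring]; omega)]
        simpa using hD.le)
    (by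
      intro k hk
      have hrw : β (k + 1) - β k = ((bump (j + 1) (k+1) * (t ^ (k + 1 - h) * (1 / d (k+1)))
          - bump (j + 1) k * (t ^ (k - h) * (1 / d k)) : ℝ) : ℂ) := by
        simp only [hβ]; push_cast; ring
      rw [hrw, Complex.norm_real, Real.norm_eq_abs]
      by_cases hkm : k + 1 ≤ 2 ^ (j + 1)
      · rw [bump_low hkm, bump_low (by omega)]
        simp; positivity
      · have hkh : 2 * h ≤ k := by omega
        obtain ⟨r, hr⟩ : ∃ r, k = h + r := ⟨k - h, by omega⟩
        have hrh : h ≤ r := by omega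
        have e1 : k + 1 - h = r + 1 := by omega
        have e2 : k - h = r := by omega
        rw [e1, e2]
        have hdk1 := hd (k + 1)
        have hdk0 := hd k
        have hT0 : t ^ r ≤ 1 := pow_le_one₀ ht0 ht1.le
        have hT1 : t ^ (r+1) ≤ 1 := pow_le_one₀ ht0 ht1.le
        have hhR : (0:ℝ) < h := by exact_mod_cast hhpos
        have hinv : 1 / ((r:ℝ) + 1) ≤ 1 / h := by
          apply one_div_le_one_div_of_le hhR
          have : (h:ℝ) ≤ r := by exact_mod_cast hrh
          linarith
        have hT2 : t ^ r * (1 - t) ≤ 1 / h := (pow_mul_one_sub_le ht0 ht1.le r).trans hinv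
        have hdf : d k - d (k + 1) ≤ d h / h := by
          have := hdiff h r
          rw [← hr] at this
          refine this.trans ?_
          rw [div_eq_mul_one_div, div_eq_mul_one_div (d h)]
          exact mul_le_mul_of_nonneg_left hinv (hd h).le
        have h3 : 1 / d (k + 1) - 1 / d k ≤ C ^ 3 / h / d4 := by
          have hp : 1 / d (k+1) - 1 / d k = (d k - d (k+1)) * (1 / d (k+1) * (1 / d k)) := by
            field_simp
          rw [hp]
          calc _ ≤ (d h / h) * (1 / d4 * (1 / d4)) := by
                have := hdk (k+1) (by omega)
                have := hdk k (by omega)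
                have := hd h
                gcongr
            _ ≤ (C ^ 3 * d4 / h) * (1 / d4 * (1 / d4)) := by gcongr
            _ = _ := by field_simp
        have h3' : 0 ≤ 1 / d (k + 1) - 1 / d k :=
          sub_nonneg.2 (one_div_le_one_div_of_le hdk1 (hanti _ _ (by omega)))
        have hl := bump_lip (j + 1) k
        have hb := bump_abs_le (j + 1) k
        -- Product rule: one of the cutoff, the power of `t` and `1 / d` is differenced in each term.
        have e3 : bump (j + 1) (k+1) * (t ^ (r + 1) * (1 / d (k+1))) - bump (j + 1) k * (t ^ r * (1 / d k))
          = (bump (j + 1) (k+1) - bump (j + 1) k) * (t ^ (r + 1) * (1 / d (k+1)))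
            + (-(bump (j+1) k * (t ^ r * (1 - t) * (1 / d (k+1))))
            + bump (j+1) k * (t ^ r * (1 / d (k+1) - 1 / d k))) := by ring
        rw [e3]
        have hk1 := hdk (k+1) (by omega)
        have b1 : |(bump (j + 1) (k+1) - bump (j + 1) k) * (t ^ (r + 1) * (1 / d (k+1)))|
            ≤ (1 / h) * (1 * (1 / d4)) := by
          rw [abs_mul, abs_of_nonneg (a := t ^ (r + 1) * (1 / d (k+1))) (by positivity)]
          have : (2:ℝ) / 2 ^ (j + 1) = 1 / h := by
            rw [hh]; push_cast; rw [pow_succ]; field_simp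
          rw [this] at hl
          gcongr
        have b2 : |-(bump (j+1) k * (t ^ r * (1 - t) * (1 / d (k+1))))| ≤ 1 * ((1 / h) * (1 / d4)) := by
          have : 0 ≤ 1 - t := by linarith
          rw [abs_neg, abs_mul, abs_of_nonneg (a := t ^ r * (1 - t) * (1 / d (k+1))) (by positivity)]
          gcongr
        have b3 : |bump (j+1) k * (t ^ r * (1 / d (k+1) - 1 / d k))| ≤ 1 * (1 * (C ^ 3 / h / d4)) := by
          rw [abs_mul, abs_of_nonneg (a := t ^ r * (1 / d (k+1) - 1 / d k)) (by positivity)]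
          gcongr
        refine (abs_add_le _ _).trans ((add_le_add b1 ((abs_add_le _ _).trans (add_le_add b2 b3))).trans (le_of_eq ?_))
        rw [hm]; push_cast; field_simp; ring)
  have e : ∀ θ : ℝ, ‖fJ d (j + 1) (t * Complex.exp (θ * Complex.I))‖ =
      t ^ h * ‖∑ k ∈ Finset.range (2 ^ (j + 3)), β k * Complex.exp (k * Complex.I * θ)‖ := by
    intro θ
    have : (t ^ h : ℝ) = ‖((t ^ h : ℝ) : ℂ)‖ := by
      rw [Complex.norm_real, Real.norm_of_nonneg (by positivity)]
    rw [this, ← norm_mul, Finset.mul_sum, fJ]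
    congr 1
    refine Finset.sum_congr rfl fun k _ => ?_
    by_cases hk : k ≤ 2 ^ (j + 1)
    · simp [hβ, bump_low hk]
    · have hkh : t ^ k = t ^ h * t ^ (k - h) := by rw [← pow_add]; congr 1; omega
      rw [mul_pow, ← Complex.exp_nat_mul, ← Complex.ofReal_pow, hkh, show (k : ℂ) * (θ * Complex.I) = k * Complex.I * θ by ring]
      simp only [hβ]; push_cast; ring
  simp only [e]
  rw [intervalIntegral.integral_const_mul]
  calc _ ≤ t ^ h * (100 * ((4 + 2 * C ^ 3) / d4)) := by gcongr
    _ = _ := by ring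

theorem fJ_continuous (d : ℕ → ℝ) (J : ℕ) : Continuous (fJ d J) := by
  unfold fJ; fun_prop

open Real in
/-- The bound of `block_L1_real` as a Lebesgue integral over the rotations of an arbitrary point `l`. -/
theorem block_L1 {d : ℕ → ℝ} (hd : ∀ k, 0 < d k) (hanti : ∀ k l, k ≤ l → d l ≤ d k) {C : ℝ} (hC : 0 < C)
    (hdoub : ∀ j, d (2 ^ j) ≤ C * d (2 ^ (j + 1)))
    (hdiff : ∀ l j : ℕ, d (l + j) - d (l + j + 1) ≤ d l / (j + 1)) (j : ℕ) {l : ℂ} (hl : ‖l‖ < 1) :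
    ∫⁻ θ in Set.Ioc (-π) π, ‖fJ d (j + 1) (Complex.exp (θ * Complex.I) * l)‖ₑ ≤
      ENNReal.ofReal (100 * (4 + 2 * C ^ 3) * (‖l‖ ^ (2 ^ j) / d (2 ^ (j + 3)))) := by
  have hpi : -π ≤ π := by linarith [pi_pos]
  have h1 := block_L1_real hd hanti hC hdoub hdiff j (norm_nonneg l) hl
  refine le_trans (le_of_eq ?_) (ENNReal.ofReal_le_ofReal h1)
  set g : ℝ → ℝ := fun θ => ‖fJ d (j + 1) (‖l‖ * Complex.exp (θ * Complex.I))‖ with hg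
  have hper : Function.Periodic g (2 * π) := by
    intro θ
    simp only [hg]
    have : Complex.exp ((θ + 2 * π : ℝ) * Complex.I) = Complex.exp (θ * Complex.I) := by
      push_cast
      rw [add_mul, Complex.exp_add, Complex.exp_two_pi_mul_I, mul_one]
    rw [this]
  -- The argument of `l` amounts to a translation of `θ`, absorbed by periodicity.
  have h2 : ∀ θ : ℝ, ‖fJ d (j + 1) (Complex.exp (θ * Complex.I) * l)‖ = g (θ + Complex.arg l) := by
    intro θ
    simp only [hg]
    congr 2
    conv_lhs => rw [← Complex.norm_mul_exp_arg_mul_I l]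
    push_cast
    rw [add_mul, Complex.exp_add]; ring
  have h3 : ∫ θ in (-π)..π, g θ = ∫ θ in (-π)..π, g (θ + Complex.arg l) := by
    rw [intervalIntegral.integral_comp_add_right]
    have := hper.intervalIntegral_add_eq (-π) (-π + Complex.arg l)
    rw [show -π + 2 * π = π by ring, show -π + Complex.arg l + 2 * π = π + Complex.arg l by ring] at this
    exact this
  have hgc : Continuous g := by
    have := fJ_continuous d (j + 1)
    fun_prop
  rw [h3, intervalIntegral.integral_of_le hpi, ofReal_integral_eq_lintegral_ofReal]
  · refine lintegral_congr fun θ => ?_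
    rw [← h2, ofReal_norm]
  · have : Continuous fun θ => g (θ + Complex.arg l) := by fun_prop
    exact (this.integrableOn_Icc).mono_set Set.Ioc_subset_Icc_self
  · exact Eventually.of_forall fun θ => norm_nonneg _

/-! ### The kernel estimate -/

theorem exists_scalar_rot {n : ℕ} (c : ℂ) (hc : ‖c‖ = 1) :
    ∃ T : En n ≃ₗᵢ[ℂ] En n, ∀ w, T w = c • w := by
  let Li : En n →ₗᵢ[ℂ] En n := ⟨c • LinearMap.id, fun w => by simp [norm_smul, hc]⟩
  exact ⟨Li.toLinearIsometryEquiv rfl, fun w => rfl⟩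

open Real in
/-- Averaging over the scalar rotations `z ↦ e^{-iθ} z`. -/
theorem rotate_lintegral {n : ℕ} (v : ℝ → ENNReal) (hv : Measurable v) (g : ℂ → ENNReal)
    (hg : Measurable g) (ξ : En n) :
    ENNReal.ofReal (2 * π) * ∫⁻ z in Bl n, g (inner ℂ z ξ) * v ‖z‖ ∂(nV n) =
      ∫⁻ z in Bl n, (∫⁻ θ in Set.Ioc (-π) π, g (Complex.exp (θ * Complex.I) * inner ℂ z ξ)) * v ‖z‖ ∂(nV n) := by
  have h1 : ∀ θ : ℝ, ∫⁻ z in Bl n, g (Complex.exp (θ * Complex.I) * inner ℂ z ξ) * v ‖z‖ ∂(nV n)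
      = ∫⁻ z in Bl n, g (inner ℂ z ξ) * v ‖z‖ ∂(nV n) := by
    intro θ
    obtain ⟨T, hT⟩ := exists_scalar_rot (n := n) (Complex.exp (((-θ : ℝ) : ℂ) * Complex.I))
      (Complex.norm_exp_ofReal_mul_I _)
    rw [← (nV_preserving T).lintegral_comp_emb (measEmb T) (fun z => g (inner ℂ z ξ) * v ‖z‖)]
    refine lintegral_congr fun z => ?_
    rw [LinearIsometryEquiv.norm_map, hT, inner_smul_left, ← Complex.exp_conj]
    simp
  have hmg : Measurable fun p : En n × ℝ => g (Complex.exp (p.2 * Complex.I) * inner ℂ p.1 ξ) := by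
    exact hg.comp (Continuous.measurable (by fun_prop))
  have h2 : ∀ z : En n, (∫⁻ θ in Set.Ioc (-π) π, g (Complex.exp (θ * Complex.I) * inner ℂ z ξ)) * v ‖z‖
      = ∫⁻ θ in Set.Ioc (-π) π, g (Complex.exp (θ * Complex.I) * inner ℂ z ξ) * v ‖z‖ := by
    intro z
    rw [lintegral_mul_const]
    exact hmg.comp measurable_prodMk_left
  simp only [h2]
  rw [lintegral_lintegral_swap]
  · simp only [h1]
    rw [lintegral_const, Measure.restrict_apply_univ, Real.volume_Ioc, mul_comm]
    congr 2; ring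
  · exact (hmg.mul (hv.comp (measurable_norm.comp measurable_fst))).aemeasurable

/-- The weight `ω̂^(-a) ω` has finite mass on the ball. -/
theorem vw_mass {n : ℕ} (i : Fin n) {ω : ℝ → ℝ} (hω : IsWeight ω) (hD : DD ω)
    (hpos : ∀ r ∈ Set.Ico (0:ℝ) 1, 0 < wh ω r) {a : ℝ} (ha0 : 0 ≤ a) (ha : a < 1) :
    ∃ C > 0, ∫⁻ w in Bl n, ENNReal.ofReal (vw ω a ‖w‖) ∂(nV n) ≤ ENNReal.ofReal C := by
  obtain ⟨C, hC, h⟩ := moment_upper hω hD hpos ha0 ha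
  have hs : 0 < sm n i 0 := sm_pos n i 0
  have hW := Wd_pos hpos 0
  refine ⟨sm n i 0 * (C * Wd ω 0 ^ (1 - a)), by positivity, ?_⟩
  have h1 := ball_polar n i 0 _ (vw_measurable hω a)
  simp only [pow_zero, one_mul] at h1
  rw [h1, ENNReal.ofReal_mul hs.le]
  gcongr
  refine le_trans (setLIntegral_mono' measurableSet_Ioo fun r hr => ?_) (h 0)
  apply ENNReal.ofReal_le_ofReal
  have hv := vw_nonneg (a := a) hω hpos (show r ∈ Set.Ico (0:ℝ) 1 from ⟨hr.1.le, hr.2⟩)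
  apply mul_le_mul_of_nonneg_right _ hv
  have := i.pos
  exact pow_le_pow_of_le_one hr.1.le hr.2.le (by rw [pow_zero]; omega)

open Real in
/-- The estimate in terms of the exponent `a`, which for `h^q = ω̂^(-1/q')` is `a = 1/q'`. The low-frequency
part of the kernel contributes a constant; the `s`-th dyadic block contributes
`≲ |ξ|^(2^(s+1)) ω̂(1 - 2⁻⁽ˢ⁺¹⁾)^(-a)`. -/
theorem kernel_estimate (n : ℕ) (i : Fin n) {ω : ℝ → ℝ} (hω : IsWeight ω) (hD : DD ω)
    (hpos : ∀ r ∈ Set.Ico (0:ℝ) 1, 0 < wh ω r) {B : En n → En n → ℂ} (hB : IsRepKernel n ω B)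
    {a : ℝ} (ha0 : 0 < a) (ha : a < 1) :
    ∃ C > 0, ∀ ξ ∈ Bl n, ∫⁻ z in Bl n, ‖B z ξ‖ₑ * ENNReal.ofReal (vw ω a ‖z‖) ∂(nV n)
      ≤ ENNReal.ofReal (C * wh ω ‖ξ‖ ^ (-a)) := by
  set d := dd n ω i with hd
  have hdpos : ∀ k, 0 < d k := dd_pos n hω hpos i
  obtain ⟨Cd, hCd, hdoub⟩ := dd_doubling n hω hD hpos i
  obtain ⟨Cb, hCb, hblock⟩ := block_const n hω hD hpos i ha0.le ha
  obtain ⟨Cs, hCs, hsum⟩ := sum_blocks hω hD hpos ha0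
  obtain ⟨Cm, hCm, hmass⟩ := vw_mass i hω hD hpos ha0.le ha
  set Q : ℝ := 100 * (4 + 2 * Cd ^ 3) with hQ
  have hQpos : 0 < Q := by positivity
  set M : ℝ := ∑ k ∈ Finset.range (2 ^ 3), 1 / d k with hM
  have hMnn : 0 ≤ M := Finset.sum_nonneg fun k _ => (one_div_pos.2 (hdpos k)).le
  have hw0 : 0 < wh ω 0 := hpos 0 (by simp)
  have hvm : Measurable fun r => ENNReal.ofReal (vw ω a r) :=
    ENNReal.measurable_ofReal.comp (vw_measurable hω a)
  refine ⟨M * Cm * wh ω 0 ^ a + Q * Cb * Cs, by positivity, fun ξ hξ => ?_⟩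
  have hξ' := norm_mem_Ico hξ
  have hwξ := hpos _ hξ'
  have hinner : ∀ z ∈ Bl n, ‖(inner ℂ z ξ : ℂ)‖ < 1 := by
    intro z hz
    refine (norm_inner_le_norm z ξ).trans_lt ?_
    have := norm_mem_Ico hz
    nlinarith [this.1, this.2, hξ'.1, hξ'.2]
  have hfm : ∀ J, Measurable fun l => ‖fJ d J l‖ₑ := fun J => (fJ_continuous d J).measurable.enorm
  have hvn : Measurable fun z : En n => ENNReal.ofReal (vw ω a ‖z‖) := hvm.comp measurable_norm
  -- The contribution of a single block.
  have hone : ∀ s, ∫⁻ z in Bl n, ‖fJ d (2 + s) (inner ℂ z ξ)‖ₑ * ENNReal.ofReal (vw ω a ‖z‖) ∂(nV n)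
      ≤ ENNReal.ofReal (Q * Cb) * ENNReal.ofReal (‖ξ‖ ^ (2 ^ (s + 1)) * Wd ω (s + 1) ^ (-a)) := by
    intro s
    obtain ⟨u, hu, hξu⟩ := exists_unit_dir i ξ
    have hrot := rotate_lintegral (n := n) _ hvm _ (hfm (2 + s)) ξ
    have hle : ∫⁻ z in Bl n, ‖fJ d (2 + s) (inner ℂ z ξ)‖ₑ * ENNReal.ofReal (vw ω a ‖z‖) ∂(nV n)
        ≤ ENNReal.ofReal (2 * π) * ∫⁻ z in Bl n, ‖fJ d (2 + s) (inner ℂ z ξ)‖ₑ * ENNReal.ofReal (vw ω a ‖z‖) ∂(nV n) := by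
      apply le_mul_of_one_le_left bot_le
      rw [ENNReal.one_le_ofReal]
      nlinarith [pi_gt_three]
    refine hle.trans ?_
    rw [hrot]
    set e := Q * ‖ξ‖ ^ (2 ^ (s + 1)) / d (2 ^ (s + 4)) with he
    have hdd := hdpos (2 ^ (s + 4))
    have henn : 0 ≤ e := by positivity
    calc _ ≤ ∫⁻ z in Bl n, ENNReal.ofReal e * ENNReal.ofReal (‖(inner ℂ u z : ℂ)‖ ^ (2 ^ (s + 1)) * vw ω a ‖z‖) ∂(nV n) := by
          refine setLIntegral_mono' (measurableSet_Bl n) fun z hz => ?_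
          have h1 := block_L1 hdpos (fun k l h => dd_anti n hω i h) hCd hdoub (dd_diff n hω i) (s + 1) (hinner z hz)
          rw [show s + 1 + 1 = 2 + s by ring] at h1
          have h2 : ‖(inner ℂ z ξ : ℂ)‖ = ‖ξ‖ * ‖(inner ℂ u z : ℂ)‖ := by
            conv_lhs => rw [hξu, inner_smul_right, norm_mul, norm_inner_symm]
            simp
          rw [ENNReal.ofReal_mul (p := ‖(inner ℂ u z : ℂ)‖ ^ (2 ^ (s + 1))) (by positivity), ← mul_assoc,
            ← ENNReal.ofReal_mul henn]
          gcongr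
          refine h1.trans (le_of_eq ?_)
          rw [h2, mul_pow, he, show s + 1 + 3 = s + 4 by ring]
          congr 1; ring
      _ = ENNReal.ofReal e * ∫⁻ z in Bl n, ENNReal.ofReal (‖z i‖ ^ (2 ^ (s + 1)) * vw ω a ‖z‖) ∂(nV n) := by
          rw [lintegral_const_mul' _ _ ENNReal.ofReal_ne_top]
          congr 1
          exact lintegral_inner i u hu (fun z r => ENNReal.ofReal (‖z‖ ^ (2 ^ (s + 1)) * vw ω a r))
      _ ≤ ENNReal.ofReal e * ENNReal.ofReal (Cb * Wd ω (s + 1) ^ (-a) * d (2 ^ (s + 1 + 3))) := by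
          gcongr
          exact hblock (s + 1) (by omega)
      _ = _ := by
          rw [← ENNReal.ofReal_mul henn, ← ENNReal.ofReal_mul (by positivity), he,
            show s + 1 + 3 = s + 4 by ring]
          congr 1
          field_simp
  have hF : ∀ z ∈ Bl n, ‖FJ d 2 (inner ℂ z ξ)‖ₑ ≤ ENNReal.ofReal M := by
    intro z hz
    rw [← ofReal_norm]
    apply ENNReal.ofReal_le_ofReal
    refine (norm_sum_le _ _).trans (Finset.sum_le_sum fun k _ => ?_)
    rw [norm_mul, norm_div, Complex.norm_real, Complex.norm_real, Real.norm_of_nonneg (cut_nonneg _ _),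
      Real.norm_of_nonneg (hdpos k).le, norm_pow]
    have := hdpos k
    calc cut 2 k * (‖(inner ℂ z ξ : ℂ)‖ ^ k / d k) ≤ 1 * (1 / d k) := by
          gcongr
          · exact cut_le_one _ _
          · exact pow_le_one₀ (norm_nonneg _) (hinner z hz).le
      _ = 1 / d k := one_mul _
  calc ∫⁻ z in Bl n, ‖B z ξ‖ₑ * ENNReal.ofReal (vw ω a ‖z‖) ∂(nV n)
      ≤ ∫⁻ z in Bl n, (ENNReal.ofReal M * ENNReal.ofReal (vw ω a ‖z‖) +
          ∑' s, ‖fJ d (2 + s) (inner ℂ z ξ)‖ₑ * ENNReal.ofReal (vw ω a ‖z‖)) ∂(nV n) := by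
        refine setLIntegral_mono' (measurableSet_Bl n) fun z hz => ?_
        rw [ENNReal.tsum_mul_right, ← add_mul]
        gcongr
        refine (kernel_enorm_le d (kernel_formula i hω hpos hB hz hξ) 2).trans ?_
        gcongr
        exact hF z hz
    _ = ENNReal.ofReal M * ∫⁻ z in Bl n, ENNReal.ofReal (vw ω a ‖z‖) ∂(nV n) +
          ∑' s, ∫⁻ z in Bl n, ‖fJ d (2 + s) (inner ℂ z ξ)‖ₑ * ENNReal.ofReal (vw ω a ‖z‖) ∂(nV n) := by
        rw [lintegral_add_left (hvn.const_mul _),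
          lintegral_const_mul' _ _ ENNReal.ofReal_ne_top, lintegral_tsum]
        intro s
        refine (Measurable.mul ?_ hvn).aemeasurable
        exact (hfm (2 + s)).comp (Continuous.measurable (by fun_prop))
    _ ≤ ENNReal.ofReal M * ENNReal.ofReal Cm + ∑' s, ENNReal.ofReal (Q * Cb) *
          ENNReal.ofReal (‖ξ‖ ^ (2 ^ (s + 1)) * Wd ω (s + 1) ^ (-a)) := by
        gcongr with s
        exact hone s
    _ ≤ ENNReal.ofReal M * ENNReal.ofReal Cm + ENNReal.ofReal (Q * Cb) *
          ENNReal.ofReal (Cs * wh ω ‖ξ‖ ^ (-a)) := by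
        rw [ENNReal.tsum_mul_left]
        gcongr
        refine le_trans ?_ (hsum _ hξ')
        exact ENNReal.tsum_comp_le_tsum_of_injective (add_left_injective 1)
          (fun N => ENNReal.ofReal (‖ξ‖ ^ (2 ^ N) * Wd ω N ^ (-a)))
    _ ≤ _ := by
        have hwa : 0 < wh ω ‖ξ‖ ^ (-a) := Real.rpow_pos_of_pos hwξ _
        rw [← ENNReal.ofReal_mul hMnn, ← ENNReal.ofReal_mul (by positivity),
          ← ENNReal.ofReal_add (by positivity) (by positivity)]
        apply ENNReal.ofReal_le_ofReal
        -- The constant term is absorbed since `ω̂(|ξ|)^(-a)` is bounded below.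
        have h1 : 1 ≤ wh ω 0 ^ a * wh ω ‖ξ‖ ^ (-a) := by
          rw [Real.rpow_neg hwξ.le, ← div_eq_mul_inv, ← Real.div_rpow hw0.le hwξ.le]
          apply Real.one_le_rpow _ ha0.le
          rw [one_le_div hwξ]
          exact wh_anti hω le_rfl hξ'.1
        nlinarith [mul_le_mul_of_nonneg_left h1 (mul_nonneg hMnn hCm.le)]

theorem stmt_5 (n : ℕ) (hn : 1 ≤ n) (q q' : ℝ) (hq : 1 < q) (hq' : 1/q + 1/q' = 1)
    (ω : ℝ → ℝ) (hω : IsWeight ω) (hD : DD ω)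
    (hpos : ∀ r ∈ Set.Ico (0:ℝ) 1, 0 < wh ω r)
    (B : En n → En n → ℂ) (hB : IsRepKernel n ω B) :
    ∃ C : ℝ, 0 < C ∧ ∀ ξ ∈ Bl n,
      (∫⁻ z in Bl n,
          ENNReal.ofReal (‖B z ξ‖ * ((wh ω ‖z‖) ^ (-(1/(q*q')))) ^ q * ω ‖z‖) ∂(nV n))
        ≤ ENNReal.ofReal (C * ((wh ω ‖ξ‖) ^ (-(1/(q*q')))) ^ q) := by
  have hq0 : 0 < q := by linarith
  have h1q : 1 / q < 1 := by rw [div_lt_one hq0]; exact hq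
  have h1q0 : 0 < 1 / q := by positivity
  obtain ⟨C, hC, h⟩ := kernel_estimate n ⟨0, hn⟩ hω hD hpos hB (a := 1 / q') (by linarith) (by linarith)
  refine ⟨C, hC, fun ξ hξ => ?_⟩
  have hpow : ∀ x : ℝ, 0 ≤ x → (x ^ (-(1/(q*q')))) ^ q = x ^ (-(1/q')) := by
    intro x hx
    rw [← Real.rpow_mul hx]
    congr 1
    by_cases h0 : q' = 0
    · simp [h0]
    · field_simp
  rw [hpow _ (hpos _ (norm_mem_Ico hξ)).le]
  refine le_trans (le_of_eq ?_) (h ξ hξ)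
  refine setLIntegral_congr_fun (measurableSet_Bl n) fun z hz => ?_
  rw [hpow _ (hpos _ (norm_mem_Ico hz)).le, mul_assoc, ENNReal.ofReal_mul (norm_nonneg _),
    ofReal_norm, vw_eq (norm_nonneg z)]
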